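/- Let (X,ρ,μ) be a space of homogeneous type satisfying the weak reverse doubling (WRD) condition, let Ω ⊆ X be an open set satisfying the weak measure density (WMD) condition, let 0 < q ≤ p ≤ r < ∞, and let ω be an A_{r/p}(X)-weight (an A₁(X)-weight when r = p). Then there exist positive constants C and C̃ such that for every measurable f on Ω with inf_{a∈ℝ} ‖f+a‖_{L^r_ω(Ω)} < ∞ and with ‖(∫_Ω |f(·)−f(y)|^q/(U(·,y)·ρ(·,y)^{s₀q}) dμ(y))^{1/q}‖_{L^r_ω(Ω)} < ∞ for some s₀ ∈ (0,1), one has C·inf_{a∈ℝ}‖f+a‖_{L^r_ω(Ω)} ≤ liminf_{s→0⁺} s^{1/q}‖(∫_Ω |f(·)−f(y)|^q/(U(·,y)·ρ(·,y)^{sq}) dμ(y))^{1/q}‖_{L^r_ω(Ω)} ≤ limsup_{s→0⁺} s^{1/q}‖(∫_Ω |f(·)−f(y)|^q/(U(·,y)·ρ(·,y)^{sq}) dμ(y))^{1/q}‖_{L^r_ω(Ω)} ≤ C̃·inf_{a∈ℝ}‖f+a‖_{L^r_ω(Ω)}. -/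

import Mathlib

noncomputable section

open MeasureTheory Filter Set
open scoped ENNReal NNReal Topology

namespace Paper

variable {X : Type*} [MeasurableSpace X]

/-- The ball with center `x` and radius `r` for the quasi-metric `ρ`. -/
def ball (ρ : X → X → ℝ) (x : X) (r : ℝ) : Set X := {y | ρ x y < r}

/-- `(X, ρ, μ)` is a quasi-metric measure space with quasi-triangle constant `K₀`:
`ρ` is a quasi-metric with constant `K₀` and all `ρ`-balls are `μ`-measurable. -/
structure IsQuasiMetricMeasure (ρ : X → X → ℝ) (μ : Measure X) (K₀ : ℝ) : Prop where
  nonneg : ∀ x y, 0 ≤ ρ x y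
  eq_zero_iff : ∀ x y, ρ x y = 0 ↔ x = y
  symm : ∀ x y, ρ x y = ρ y x
  one_le : 1 ≤ K₀
  triangle : ∀ x y z, ρ x z ≤ K₀ * (ρ x y + ρ y z)
  measurableSet_ball : ∀ x r, MeasurableSet (ball ρ x r)

/-- The doubling condition for `μ` with doubling constant `L ∈ [1, ∞)`. -/
def IsDoubling (ρ : X → X → ℝ) (μ : Measure X) (L : ℝ≥0∞) : Prop :=
  1 ≤ L ∧ L < ∞ ∧ ∀ (x : X) (r : ℝ), 0 < r →
    0 < μ (ball ρ x r) ∧ μ (ball ρ x (2 * r)) ≤ L * μ (ball ρ x r) ∧ μ (ball ρ x r) < ∞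

/-- `U(x,y) := min{μ(B(x,ρ(x,y))), μ(B(y,ρ(x,y)))}`. -/
def U (ρ : X → X → ℝ) (μ : Measure X) (x y : X) : ℝ≥0∞ :=
  min (μ (ball ρ x (ρ x y))) (μ (ball ρ y (ρ x y)))

/-- The weak reverse doubling (WRD) condition. -/
def WRD (ρ : X → X → ℝ) (μ : Measure X) : Prop :=
  ∃ (x₀ : X) (lam C : ℝ), 1 < lam ∧ 1 < C ∧
    ENNReal.ofReal C ≤
      liminf (fun r : ℝ => μ (ball ρ x₀ (lam * r)) / μ (ball ρ x₀ r)) atTop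

/-- The weak measure density (WMD) condition for `Ω`. -/
def WMD (ρ : X → X → ℝ) (μ : Measure X) (Ω : Set X) : Prop :=
  ∃ (x₀ : X) (C₀ : ℝ), 0 < C₀ ∧ C₀ ≤ 1 ∧
    ENNReal.ofReal C₀ ≤
      liminf (fun r : ℝ => μ (ball ρ x₀ r ∩ Ω) / μ (ball ρ x₀ r)) atTop

/-- `Ω` is open with respect to the quasi-metric `ρ`. -/
def IsRhoOpen (ρ : X → X → ℝ) (Ω : Set X) : Prop :=
  ∀ x ∈ Ω, ∃ r : ℝ, 0 < r ∧ ball ρ x r ⊆ Ω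

/-- The Maz'ya–Shaposhnikova integrand on a set `E`:
`x ↦ (∫_E |f(x) − f(y)|^q / (U(x,y) ρ(x,y)^{sq}) dμ(y))^{1/q}`. -/
def sob (ρ : X → X → ℝ) (μ : Measure X) (E : Set X) (f : X → ℝ) (q s : ℝ) (x : X) :
    ℝ≥0∞ :=
  (∫⁻ y in E, ENNReal.ofReal |f x - f y| ^ q /
      (U ρ μ x y * ENNReal.ofReal (ρ x y) ^ (s * q)) ∂μ) ^ (1 / q)

/-- The `A₁(X)` characteristic of a weight `ω`. -/
def A1Const (ρ : X → X → ℝ) (μ : Measure X) (ω : X → ℝ≥0∞) : ℝ≥0∞ :=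
  ⨆ (x : X) (r : ℝ) (_ : 0 < r),
    ((∫⁻ y in ball ρ x r, ω y ∂μ) / μ (ball ρ x r)) /
      essInf ω (μ.restrict (ball ρ x r))

/-- The `A_t(X)` characteristic, `t ∈ (1,∞)`, of a weight `ω`. -/
def ApConst (ρ : X → X → ℝ) (μ : Measure X) (ω : X → ℝ≥0∞) (t : ℝ) : ℝ≥0∞ :=
  ⨆ (x : X) (r : ℝ) (_ : 0 < r),
    ((∫⁻ y in ball ρ x r, ω y ∂μ) / μ (ball ρ x r)) *
      ((∫⁻ y in ball ρ x r, ω y ^ (1 / (1 - t)) ∂μ) / μ (ball ρ x r)) ^ (t - 1)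

/-- The weighted Lebesgue quasi-norm `(∫_E g^p ω dμ)^{1/p}` of an
`ℝ≥0∞`-valued function `g`. -/
def wnorm (μ : Measure X) (ω : X → ℝ≥0∞) (p : ℝ) (E : Set X) (g : X → ℝ≥0∞) :
    ℝ≥0∞ :=
  (∫⁻ x in E, g x ^ p * ω x ∂μ) ^ (1 / p)

/-!
Everything is expressed through the energy `∫_E |f(x) - f(y)|^q / (U(x,y) ρ(x,y)^σ) dμ(y)` at
`σ = s q`, and each bound is a weighted `L^{r/q}` estimate for it as `σ → 0⁺`.

*Upper bound.* For `0 < σ ≤ σ₀` the part of the energy with `ρ(x,y) < 1` is at most the energy at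
`σ₀`, which the factor `σ` kills in the limit. In the rest, split `|f(x) - f(y)|^q` and sum over
dyadic annuli: the term `|f(x)|^q` costs `∑ 2^{-nσ} ≲ 1/σ`, and the term `|f(y)|^q` is a geometric
series of ball averages, bounded on weighted `L^{r/q}` by the Muckenhoupt condition.

*Lower bound.* WRD and WMD give annuli around `x₀` with ratio `Λ` in which `Ω` carries a fixed
fraction of the mass of the ball. Hence the weight has total mass `0` or `∞`, and in the second case
the averages of `|f|^q` over large balls tend to `0`. For `x` in a fixed ball, every annulus far out
then contributes at least about `|f(x)|^q Λ^{-nσ}` to the energy. The geometric series is of order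
`1/σ`, so `liminf σ · energy ≳ |f(x)|^q`, locally uniformly, and Fatou's lemma concludes.
-/

/-! ### Inequalities for `ℝ≥0∞`-valued integrals and series -/

section Integrals

lemma rpow_add_le_two_rpow_mul (a b : ℝ≥0∞) {t : ℝ} (ht : 0 ≤ t) :
    (a + b) ^ t ≤ 2 ^ t * (a ^ t + b ^ t) := by
  wlog hab : a ≤ b generalizing a b
  · rw [add_comm a, add_comm (a ^ t)]
    exact this b a (le_of_not_ge hab)
  calc (a + b) ^ t ≤ (2 * b) ^ t := by rw [two_mul]; gcongr
    _ = 2 ^ t * b ^ t := ENNReal.mul_rpow_of_nonneg _ _ ht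
    _ ≤ 2 ^ t * (a ^ t + b ^ t) := by gcongr; exact le_add_self

lemma lintegral_add_rpow_mul_le {ν : Measure X} (f : X → ℝ≥0∞) {g w : X → ℝ≥0∞}
    (hg : Measurable g) (hw : Measurable w) {t : ℝ} (ht : 0 ≤ t) :
    ∫⁻ x, (f x + g x) ^ t * w x ∂ν ≤
      2 ^ t * (∫⁻ x, f x ^ t * w x ∂ν + ∫⁻ x, g x ^ t * w x ∂ν) := by
  have hgw : Measurable fun x ↦ g x ^ t * w x := (hg.pow_const t).mul hw
  rw [← lintegral_add_right _ hgw,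
    ← lintegral_const_mul' _ _ (ENNReal.rpow_ne_top_of_nonneg ht ENNReal.ofNat_ne_top)]
  refine lintegral_mono fun x ↦ ?_
  rw [← add_mul, ← mul_assoc]
  gcongr
  exact rpow_add_le_two_rpow_mul _ _ ht

lemma lintegral_indicator_rpow_mul {ν : Measure X} {E : Set X} (hE : MeasurableSet E)
    (g w : X → ℝ≥0∞) {t : ℝ} (ht : 0 < t) :
    ∫⁻ x, E.indicator g x ^ t * w x ∂ν = ∫⁻ x in E, g x ^ t * w x ∂ν := by
  rw [← lintegral_indicator hE]
  congr with x
  by_cases hx : x ∈ E <;> simp [hx, ht]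

lemma ofReal_abs_add_rpow_le (a b : ℝ) {t : ℝ} (ht : 0 ≤ t) :
    ENNReal.ofReal |a + b| ^ t ≤
      2 ^ t * (ENNReal.ofReal |a| ^ t + ENNReal.ofReal |b| ^ t) := by
  refine le_trans ?_ (rpow_add_le_two_rpow_mul _ _ ht)
  rw [← ENNReal.ofReal_add (abs_nonneg a) (abs_nonneg b)]
  gcongr
  exact abs_add_le a b

lemma inv_le_mul_inv_of_le_mul {a b : ℝ≥0∞} {D : ℝ≥0} (ha : a ≠ 0) (h : a ≤ D * b) :
    b⁻¹ ≤ D * a⁻¹ := by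
  have hD : (D : ℝ≥0∞) ≠ 0 := by rintro hD; simp_all
  calc b⁻¹ = D * (D * b)⁻¹ := by
        rw [ENNReal.mul_inv (.inl hD) (.inl ENNReal.coe_ne_top), ← mul_assoc,
          ENNReal.mul_inv_cancel hD ENNReal.coe_ne_top, one_mul]
    _ ≤ D * a⁻¹ := by gcongr

lemma setLAverage_le_mul_setLAverage {ν : Measure X} {s s' : Set X} (hs : s ⊆ s')
    (hs' : ν s' ≠ 0) {D : ℝ≥0} (hD : ν s' ≤ D * ν s) (h : X → ℝ≥0∞) :
    ⨍⁻ y in s, h y ∂ν ≤ D * ⨍⁻ y in s', h y ∂ν := by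
  rw [setLAverage_eq, setLAverage_eq, div_eq_mul_inv, div_eq_mul_inv, mul_left_comm]
  gcongr
  exact inv_le_mul_inv_of_le_mul hs' hD

lemma lintegral_mul_rpow_le {ν : Measure X} {f g : X → ℝ≥0∞} (hf : AEMeasurable f ν)
    (hg : AEMeasurable g ν) {t : ℝ} (ht : 1 < t) :
    (∫⁻ y, f y * g y ∂ν) ^ t ≤
      (∫⁻ y, f y ^ t ∂ν) * (∫⁻ y, g y ^ (t / (t - 1)) ∂ν) ^ (t - 1) := by
  have ht0 : 0 < t := by linarith
  have ht1 : t - 1 ≠ 0 := by linarith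
  have hHolder := ENNReal.rpow_le_rpow
    (ENNReal.lintegral_mul_le_Lp_mul_Lq ν (.conjExponent ht) hf hg) ht0.le
  rwa [ENNReal.mul_rpow_of_nonneg _ _ ht0.le, ← ENNReal.rpow_mul, ← ENNReal.rpow_mul,
    one_div_mul_cancel ht0.ne', ENNReal.rpow_one, Real.conjExponent,
    show 1 / (t / (t - 1)) * t = t - 1 by field_simp] at hHolder

lemma rpow_lintegral_le {ν : Measure X} {h : X → ℝ≥0∞} (hh : AEMeasurable h ν) {t : ℝ}
    (ht : 1 ≤ t) : (∫⁻ y, h y ∂ν) ^ t ≤ ν univ ^ (t - 1) * ∫⁻ y, h y ^ t ∂ν := by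
  rcases ht.eq_or_lt with rfl | ht
  · simp
  · simpa [mul_comm] using lintegral_mul_rpow_le hh (aemeasurable_const (b := 1)) ht

lemma rpow_laverage_le {ν : Measure X} {h : X → ℝ≥0∞} (hh : AEMeasurable h ν) {t : ℝ}
    (ht : 1 ≤ t) : (⨍⁻ y, h y ∂ν) ^ t ≤ ⨍⁻ y, h y ^ t ∂ν := by
  refine (rpow_lintegral_le (hh.smul_measure _) ht).trans (mul_le_of_le_one_left' ?_)
  refine ENNReal.rpow_le_one ?_ (by linarith)
  exact (ENNReal.div_eq_inv_mul.symm.trans_le ENNReal.div_self_le_one :)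

lemma rpow_tsum_mul_le (a T : ℕ → ℝ≥0∞) {t : ℝ} (ht : 1 ≤ t) :
    (∑' k, a k * T k) ^ t ≤ (∑' k, a k) ^ (t - 1) * ∑' k, a k * T k ^ t := by
  simpa [lintegral_sum_measure, lintegral_smul_measure, Measure.sum_apply] using
    rpow_lintegral_le (ν := .sum fun k ↦ a k • .dirac k) (measurable_of_countable T).aemeasurable ht

lemma lintegral_rpow_tsum_mul_le {ν : Measure X} {w : X → ℝ≥0∞} (hw : Measurable w)
    (a : ℕ → ℝ≥0∞) {P : ℕ → X → ℝ≥0∞} (hP : ∀ k, Measurable (P k)) {t : ℝ} (ht : 1 ≤ t)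
    {M : ℝ≥0∞} (hM : ∀ k, ∫⁻ x, P k x ^ t * w x ∂ν ≤ M) :
    ∫⁻ x, (∑' k, a k * P k x) ^ t * w x ∂ν ≤ (∑' k, a k) ^ t * M := by
  have hPw : ∀ k, Measurable fun x ↦ P k x ^ t * w x := fun k ↦ ((hP k).pow_const t).mul hw
  calc ∫⁻ x, (∑' k, a k * P k x) ^ t * w x ∂ν
      ≤ ∫⁻ x, (∑' k, a k) ^ (t - 1) * ∑' k, a k * (P k x ^ t * w x) ∂ν := by
        refine lintegral_mono fun x ↦ ?_
        simp_rw [← mul_assoc, ENNReal.tsum_mul_right]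
        rw [← mul_assoc]
        gcongr
        exact rpow_tsum_mul_le a (P · x) ht
    _ = (∑' k, a k) ^ (t - 1) * ∑' k, a k * ∫⁻ x, P k x ^ t * w x ∂ν := by
        rw [lintegral_const_mul _ (.tsum fun k ↦ (hPw k).const_mul _),
          lintegral_tsum fun k ↦ ((hPw k).const_mul _).aemeasurable]
        simp_rw [lintegral_const_mul _ (hPw _)]
    _ ≤ (∑' k, a k) ^ (t - 1) * ∑' k, a k * M := by gcongr with k; exact hM k
    _ = (∑' k, a k) ^ t * M := by
        rw [ENNReal.tsum_mul_right, ← mul_assoc]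
        congr 1
        nth_rw 2 [← ENNReal.rpow_one (∑' k, a k)]
        rw [← ENNReal.rpow_add_of_nonneg _ _ (by linarith) zero_le_one, sub_add_cancel]

lemma lintegral_tsum_indicator_mul {ι : Type*} [Countable ι] {ν : Measure X} {B : ι → Set X}
    (hB : ∀ i, MeasurableSet (B i)) (b : ι → ℝ≥0∞) {w : X → ℝ≥0∞} (hw : Measurable w) :
    ∫⁻ x, (∑' i, (B i).indicator (fun _ ↦ b i) x) * w x ∂ν = ∑' i, b i * ∫⁻ x in B i, w x ∂ν := by
  simp_rw [← ENNReal.tsum_mul_right, ← indicator_mul_left]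
  rw [lintegral_tsum fun i ↦ ((hw.const_mul _).indicator (hB i)).aemeasurable]
  simp_rw [lintegral_indicator (hB _), lintegral_const_mul _ hw]

lemma lintegral_rpow_mul_le_liminf {ι : Type*} {l : Filter ι} {ν : Measure X} {B : ℕ → Set X}
    (hB : ∀ k, MeasurableSet (B k)) (hBx : ∀ x, ∀ᶠ k in atTop, x ∈ B k)
    {g w : X → ℝ≥0∞} (hg : Measurable g) (hw : Measurable w) {F : ι → X → ℝ≥0∞} {t : ℝ}
    (ht : 0 < t)
    (hF : ∀ k, ∀ ε ≠ 0, ∀ᶠ i in l, ∀ᵐ x ∂ν, x ∈ B k → g x ≤ F i x + ε) :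
    ∫⁻ x, g x ^ t * w x ∂ν ≤ liminf (fun i ↦ ∫⁻ x, F i x ^ t * w x ∂ν) l := by
  set ε : ℕ → ℝ≥0∞ := fun k ↦ (k : ℝ≥0∞)⁻¹
  set h : ℕ → X → ℝ≥0∞ := fun k ↦ (B k).indicator fun x ↦ (g x - ε k) ^ t * w x
  have hh : ∀ k, Measurable (h k) := fun k ↦
    (((hg.sub_const _).pow_const _).mul hw).indicator (hB k)
  have h_le : ∀ x, g x ^ t * w x ≤ liminf (h · x) atTop := by
    intro x
    by_cases hgx : g x = 0
    · simp [hgx, ht]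
    have hsub : Tendsto (fun k ↦ g x - ε k) atTop (𝓝 (g x)) := by
      simpa using ENNReal.Tendsto.sub tendsto_const_nhds ENNReal.tendsto_inv_nat_nhds_zero
        (.inr ENNReal.zero_ne_top)
    have hlim : Tendsto (fun k ↦ (g x - ε k) ^ t * w x) atTop (𝓝 (g x ^ t * w x)) :=
      ENNReal.Tendsto.mul_const (hsub.ennrpow_const t) (.inl (by simp [hgx, ht.not_gt]))
    refine (hlim.congr' ?_).liminf_eq.ge
    filter_upwards [hBx x] with k hk
    simp only [h, indicator_of_mem hk]
  have h_int : ∀ k, ∫⁻ x, h k x ∂ν ≤ liminf (fun i ↦ ∫⁻ x, F i x ^ t * w x ∂ν) l := by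
    intro k
    refine le_liminf_of_le (by isBoundedDefault) ?_
    filter_upwards [hF k (ε k) (by simp [ε])] with i hi
    refine lintegral_mono_ae (hi.mono fun x hx ↦ indicator_apply_le' (fun hxB ↦ ?_) fun _ ↦ zero_le)
    gcongr
    exact tsub_le_iff_right.2 (hx hxB)
  calc ∫⁻ x, g x ^ t * w x ∂ν ≤ ∫⁻ x, liminf (h · x) atTop ∂ν := lintegral_mono h_le
    _ ≤ liminf (fun k ↦ ∫⁻ x, h k x ∂ν) atTop := lintegral_liminf_le hh
    _ ≤ liminf (fun i ↦ ∫⁻ x, F i x ^ t * w x ∂ν) l :=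
        (liminf_le_liminf (.of_forall h_int)).trans_eq (liminf_const _)

end Integrals

section GeometricSeries

lemma tsum_ofReal_pow_rpow_neg {Λ : ℝ} (hΛ : 0 < Λ) (σ : ℝ) :
    ∑' n : ℕ, ENNReal.ofReal (Λ ^ n) ^ (-σ) =
      (1 - ENNReal.ofReal (Real.exp (-(σ * Real.log Λ))))⁻¹ := by
  rw [← ENNReal.tsum_geometric]
  congr! 2 with n
  rw [ENNReal.ofReal_rpow_of_pos (by positivity), ← ENNReal.ofReal_pow (Real.exp_pos _).le,
    ← Real.exp_nat_mul, Real.rpow_def_of_pos (by positivity), Real.log_pow]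
  congr! 2
  ring

lemma ofReal_mul_tsum_rpow_neg_eq {Λ σ : ℝ} (hΛ : 1 < Λ) (hσ : 0 < σ) :
    ENNReal.ofReal σ * ∑' n : ℕ, ENNReal.ofReal (Λ ^ n) ^ (-σ) =
      ENNReal.ofReal (σ / (1 - Real.exp (-(σ * Real.log Λ)))) := by
  have hexp : Real.exp (-(σ * Real.log Λ)) < 1 := by
    have := Real.log_pos hΛ
    rw [Real.exp_lt_one_iff, neg_lt_zero]
    positivity
  rw [tsum_ofReal_pow_rpow_neg (by linarith), ENNReal.ofReal_div_of_pos (by linarith),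
    ENNReal.ofReal_sub _ (Real.exp_pos _).le, ENNReal.ofReal_one, div_eq_mul_inv]

lemma ofReal_mul_tsum_rpow_neg_le {Λ σ : ℝ} (hΛ : 1 < Λ) (hσ : 0 < σ) :
    ENNReal.ofReal σ * ∑' n : ℕ, ENNReal.ofReal (Λ ^ n) ^ (-σ) ≤
      ENNReal.ofReal (1 / Real.log Λ + σ) := by
  have hlog := Real.log_pos hΛ
  rw [ofReal_mul_tsum_rpow_neg_eq hΛ hσ]
  refine ENNReal.ofReal_le_ofReal ?_
  set v := σ * Real.log Λ with hv
  have hv0 : 0 < v := by positivity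
  have hexp : (1 + v) * Real.exp (-v) ≤ 1 := by
    rw [Real.exp_neg, ← div_eq_mul_inv, div_le_one (Real.exp_pos v), add_comm]
    exact Real.add_one_le_exp v
  have hexp_lt : Real.exp (-v) < 1 := by simpa using hv0
  rw [div_le_iff₀ (by linarith),
    show 1 / Real.log Λ + σ = (1 + v) / Real.log Λ by rw [hv]; field_simp,
    div_mul_eq_mul_div, le_div_iff₀ hlog]
  linarith

lemma ofReal_le_ofReal_mul_tsum_rpow_neg {Λ σ : ℝ} (hΛ : 1 < Λ) (hσ : 0 < σ) :
    ENNReal.ofReal (1 / Real.log Λ) ≤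
      ENNReal.ofReal σ * ∑' n : ℕ, ENNReal.ofReal (Λ ^ n) ^ (-σ) := by
  have hlog := Real.log_pos hΛ
  have hv0 : 0 < σ * Real.log Λ := by positivity
  have hexp_lt : Real.exp (-(σ * Real.log Λ)) < 1 := by simpa using hv0
  rw [ofReal_mul_tsum_rpow_neg_eq hΛ hσ]
  refine ENNReal.ofReal_le_ofReal ?_
  rw [div_le_div_iff₀ hlog (by linarith)]
  linarith [Real.one_sub_le_exp_neg (σ * Real.log Λ)]

end GeometricSeries

/-! ### Quasi-metric geometry of spaces of homogeneous type -/

section Geometry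

variable {Y : Type*} {ρ : X → X → ℝ} {μ : Measure X} {K₀ : ℝ} {L : ℝ≥0∞}

lemma ball_subset_ball (ρ : Y → Y → ℝ) (x : Y) {r r' : ℝ} (h : r ≤ r') :
    ball ρ x r ⊆ ball ρ x r' :=
  fun _ hy ↦ lt_of_lt_of_le hy h

lemma eventually_mem_ball_natCast (ρ : Y → Y → ℝ) (x y : Y) :
    ∀ᶠ n : ℕ in atTop, y ∈ ball ρ x n :=
  tendsto_natCast_atTop_atTop.eventually_gt_atTop (ρ x y)

/-- The annulus with center `x`, closed inner radius `a` and open outer radius `b`. -/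
def annulus (ρ : Y → Y → ℝ) (x : Y) (a b : ℝ) : Set Y := ρ x ⁻¹' Ico a b

lemma annulus_eq_diff (ρ : Y → Y → ℝ) (x : Y) (a b : ℝ) :
    annulus ρ x a b = ball ρ x b \ ball ρ x a := by
  ext y
  simp [annulus, ball, and_comm]

lemma annulus_subset_ball (ρ : Y → Y → ℝ) (x : Y) (a b : ℝ) : annulus ρ x a b ⊆ ball ρ x b :=
  fun _ hy ↦ hy.2

lemma pairwise_disjoint_annulus (ρ : Y → Y → ℝ) (x : Y) {r : ℕ → ℝ} (hr : Monotone r) :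
    Pairwise (Function.onFun Disjoint fun n ↦ annulus ρ x (r n) (r (n + 1))) :=
  hr.pairwise_disjoint_on_Ico_succ.mono fun _ _ h ↦ h.preimage (ρ x)

lemma compl_ball_one_subset_iUnion_annulus (ρ : Y → Y → ℝ) (x : Y) :
    (ball ρ x 1)ᶜ ⊆ ⋃ n : ℕ, annulus ρ x (2 ^ n) (2 * 2 ^ n) := by
  intro y (hy : ¬ρ x y < 1)
  obtain ⟨n, hn⟩ := exists_nat_pow_near (not_lt.1 hy) one_lt_two
  exact mem_iUnion.2 ⟨n, hn.1, by simpa only [pow_succ'] using hn.2⟩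

lemma IsQuasiMetricMeasure.rho_self (hX : IsQuasiMetricMeasure ρ μ K₀) (x : X) : ρ x x = 0 :=
  (hX.eq_zero_iff x x).2 rfl

lemma IsQuasiMetricMeasure.rho_pos (hX : IsQuasiMetricMeasure ρ μ K₀) {x y : X} (hxy : x ≠ y) :
    0 < ρ x y :=
  (hX.nonneg x y).lt_of_ne fun h ↦ hxy ((hX.eq_zero_iff x y).1 h.symm)

lemma IsQuasiMetricMeasure.ball_subset (hX : IsQuasiMetricMeasure ρ μ K₀) {x y : X}
    {a b c : ℝ} (hxy : ρ x y ≤ a) (hc : K₀ * (a + b) ≤ c) : ball ρ y b ⊆ ball ρ x c := by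
  intro z (hz : ρ y z < b)
  have hK : 0 < K₀ := zero_lt_one.trans_le hX.one_le
  calc ρ x z ≤ K₀ * (ρ x y + ρ y z) := hX.triangle x y z
    _ < K₀ * (a + b) := by
        gcongr 1
        exact add_lt_add_of_le_of_lt hxy hz
    _ ≤ c := hc

lemma IsQuasiMetricMeasure.measurableSet_annulus (hX : IsQuasiMetricMeasure ρ μ K₀) (x : X)
    (a b : ℝ) : MeasurableSet (annulus ρ x a b) := by
  rw [annulus_eq_diff]
  exact (hX.measurableSet_ball x b).diff (hX.measurableSet_ball x a)

lemma IsDoubling.measure_ball_ne_zero (hL : IsDoubling ρ μ L) (x : X) {r : ℝ} (hr : 0 < r) :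
    μ (ball ρ x r) ≠ 0 :=
  (hL.2.2 x r hr).1.ne'

lemma IsDoubling.measure_ball_ne_top (hL : IsDoubling ρ μ L) (x : X) {r : ℝ} (hr : 0 < r) :
    μ (ball ρ x r) ≠ ∞ :=
  (hL.2.2 x r hr).2.2.ne

lemma IsDoubling.sigmaFinite (hL : IsDoubling ρ μ L) : SigmaFinite μ := by
  rcases isEmpty_or_nonempty X with _ | ⟨⟨x⟩⟩
  · rw [Measure.eq_zero_of_isEmpty μ]
    infer_instance
  refine ⟨⟨⟨fun n : ℕ ↦ ball ρ x (n + 1), fun _ ↦ trivial,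
    fun n ↦ (hL.2.2 x (n + 1) (by positivity)).2.2, eq_univ_of_forall fun y ↦ ?_⟩⟩⟩
  obtain ⟨n, hn⟩ := exists_nat_gt (ρ x y)
  exact mem_iUnion.2 ⟨n, ball_subset_ball ρ x (by linarith) hn⟩

lemma IsDoubling.exists_measure_ball_mul_le (hL : IsDoubling ρ μ L) (c : ℝ) :
    ∃ D : ℝ≥0, ∀ x r, 0 < r → μ (ball ρ x (c * r)) ≤ D * μ (ball ρ x r) := by
  have h_pow : ∀ (n : ℕ) (x : X) (r : ℝ), 0 < r →
      μ (ball ρ x (2 ^ n * r)) ≤ L ^ n * μ (ball ρ x r) := by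
    intro n x r hr
    induction n with
    | zero => simp
    | succ k ih =>
      calc μ (ball ρ x (2 ^ (k + 1) * r)) = μ (ball ρ x (2 * (2 ^ k * r))) := by
            rw [pow_succ', mul_assoc]
        _ ≤ L * μ (ball ρ x (2 ^ k * r)) := (hL.2.2 x _ (by positivity)).2.1
        _ ≤ L * (L ^ k * μ (ball ρ x r)) := by gcongr
        _ = L ^ (k + 1) * μ (ball ρ x r) := by rw [pow_succ', mul_assoc]
  obtain ⟨n, hn⟩ := pow_unbounded_of_one_lt c one_lt_two
  lift L to ℝ≥0 using hL.2.1.ne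
  refine ⟨L ^ n, fun x r hr ↦ ?_⟩
  calc μ (ball ρ x (c * r)) ≤ μ (ball ρ x (2 ^ n * r)) :=
        measure_mono (ball_subset_ball ρ x (by gcongr))
    _ ≤ ↑(L ^ n) * μ (ball ρ x r) := by exact_mod_cast h_pow n x r hr

lemma exists_measure_ball_le (hX : IsQuasiMetricMeasure ρ μ K₀) (hL : IsDoubling ρ μ L)
    (a c : ℝ) :
    ∃ D : ℝ≥0, ∀ x y r, 0 < r → ρ x y ≤ a * r → μ (ball ρ x (c * r)) ≤ D * μ (ball ρ y r) := by
  obtain ⟨D, hD⟩ := hL.exists_measure_ball_mul_le (K₀ * (a + c))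
  refine ⟨D, fun x y r hr hxy ↦ (measure_mono ?_).trans (hD y r hr)⟩
  exact hX.ball_subset ((hX.symm y x).trans_le hxy) (by linarith)

lemma exists_measure_ball_rho_le_mul_U (hX : IsQuasiMetricMeasure ρ μ K₀)
    (hL : IsDoubling ρ μ L) (c : ℝ) :
    ∃ D : ℝ≥0, ∀ x y, x ≠ y → μ (ball ρ x (c * ρ x y)) ≤ D * U ρ μ x y := by
  obtain ⟨D, hD⟩ := exists_measure_ball_le hX hL 1 c
  refine ⟨D, fun x y hxy ↦ ?_⟩
  have hpos := hX.rho_pos hxy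
  rw [U, mul_min]
  exact le_min (hD x x _ hpos (by simp [hX.rho_self, hpos.le])) (hD x y _ hpos (one_mul _).ge)

lemma exists_U_le_mul_measure_ball (hX : IsQuasiMetricMeasure ρ μ K₀) (hL : IsDoubling ρ μ L) :
    ∃ D : ℝ≥0, ∀ z r, 0 < r → ∀ x ∈ ball ρ z r, ∀ y ∈ ball ρ z r,
      ρ x y ≤ 2 * K₀ * r ∧ U ρ μ x y ≤ D * μ (ball ρ z r) := by
  have hK := hX.one_le
  obtain ⟨D, hD⟩ := exists_measure_ball_le hX hL 1 (2 * K₀)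
  refine ⟨D, fun z r hr x (hx : ρ z x < r) y (hy : ρ z y < r) ↦ ?_⟩
  rw [hX.symm] at hx
  have hxy : ρ x y ≤ 2 * K₀ * r :=
    calc ρ x y ≤ K₀ * (ρ x z + ρ z y) := hX.triangle x z y
      _ ≤ K₀ * (r + r) := by gcongr
      _ = 2 * K₀ * r := by ring
  refine ⟨hxy, (min_le_left _ _).trans ((measure_mono ?_).trans (hD x z r hr (by linarith)))⟩
  exact ball_subset_ball ρ x hxy

lemma exists_setLAverage_ball_le (hX : IsQuasiMetricMeasure ρ μ K₀) (hL : IsDoubling ρ μ L) :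
    ∃ D : ℝ≥0, ∀ z r, 0 < r → ∀ x ∈ ball ρ z r, ∀ h : X → ℝ≥0∞,
      ⨍⁻ y in ball ρ x r, h y ∂μ ≤ D * ⨍⁻ y in ball ρ z (2 * K₀ * r), h y ∂μ := by
  have hK := hX.one_le
  obtain ⟨D, hD⟩ := exists_measure_ball_le hX hL 1 (2 * K₀)
  refine ⟨D, fun z r hr x (hx : ρ z x < r) h ↦ setLAverage_le_mul_setLAverage
    (hX.ball_subset hx.le (by linarith)) (hL.measure_ball_ne_zero z (by positivity))
    (hD z x r hr (by linarith)) h⟩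

/-- A maximal `R`-separated set for `ρ`, described by separation and covering. -/
structure IsNet (ρ : X → X → ℝ) (R : ℝ) (S : Set X) : Prop where
  separated : S.Pairwise fun z w ↦ R ≤ ρ z w
  exists_mem_ball : ∀ x, ∃ z ∈ S, x ∈ ball ρ z R

lemma IsQuasiMetricMeasure.exists_isNet (hX : IsQuasiMetricMeasure ρ μ K₀) {R : ℝ}
    (hR : 0 < R) : ∃ S, IsNet ρ R S := by
  obtain ⟨S, hS⟩ := zorn_subset {S : Set X | S.Pairwise fun z w ↦ R ≤ ρ z w} fun c hc hchain ↦
    ⟨⋃₀ c, (pairwise_sUnion hchain.directedOn).2 fun s hs ↦ hc hs,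
      fun s hs ↦ subset_sUnion_of_mem hs⟩
  refine ⟨S, hS.prop, fun x ↦ by_contra fun hx ↦ ?_⟩
  have hfar : ∀ z ∈ S, R ≤ ρ z x := by simpa [ball] using hx
  have hins : (insert x S).Pairwise fun z w ↦ R ≤ ρ z w :=
    pairwise_insert.2 ⟨hS.prop, fun z hz _ ↦ ⟨hX.symm z x ▸ hfar z hz, hfar z hz⟩⟩
  have hxS : x ∈ S := hS.le_of_ge hins (subset_insert x S) (mem_insert x S)
  exact hR.not_ge ((hfar x hxS).trans_eq (hX.rho_self x))

lemma IsNet.pairwise_disjoint_ball (hX : IsQuasiMetricMeasure ρ μ K₀) {R : ℝ} {S : Set X}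
    (hS : IsNet ρ R S) :
    Pairwise (Function.onFun Disjoint fun z : S ↦ ball ρ (z : X) (R / (2 * K₀))) := by
  intro z w hzw
  refine disjoint_left.2 fun u (hzu : ρ z u < _) (hwu : ρ w u < _) ↦ ?_
  have hK : 0 < K₀ := zero_lt_one.trans_le hX.one_le
  refine lt_irrefl (ρ z w) ?_
  calc ρ z w ≤ K₀ * (ρ z u + ρ w u) := hX.symm w u ▸ hX.triangle z u w
    _ < K₀ * (R / (2 * K₀) + R / (2 * K₀)) := by gcongr
    _ = R := by field_simp; ring
    _ ≤ ρ z w := hS.separated z.2 w.2 (Subtype.coe_injective.ne hzw)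

lemma IsNet.countable (hX : IsQuasiMetricMeasure ρ μ K₀) (hL : IsDoubling ρ μ L) {R : ℝ}
    (hR : 0 < R) {S : Set X} (hS : IsNet ρ R S) : Countable S := by
  have := hL.sigmaFinite
  have hr : 0 < R / (2 * K₀) := div_pos hR (by linarith [hX.one_le])
  rw [← countable_univ_iff]
  refine (Measure.countable_meas_pos_of_disjoint_iUnion (μ := μ)
    (fun z : S ↦ hX.measurableSet_ball _ _) (hS.pairwise_disjoint_ball hX)).mono fun z _ ↦ ?_
  exact (hL.measure_ball_ne_zero z hr).bot_lt

/- A ball of radius `R` around `y` has measure comparable to that of each of the disjoint small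
balls around the net points near `y`, all of which lie in a fixed dilate of it. -/
lemma exists_tsum_indicator_ball_le (hX : IsQuasiMetricMeasure ρ μ K₀) (hL : IsDoubling ρ μ L)
    (c : ℝ) :
    ∃ D : ℝ≥0, ∀ R, 0 < R → ∀ S, IsNet ρ R S → ∀ y,
      ∑' z : S, (ball ρ (z : X) (c * R)).indicator (1 : X → ℝ≥0∞) y ≤ D := by
  have hK := hX.one_le
  obtain ⟨D₁, hD₁⟩ := exists_measure_ball_le hX hL (c * (2 * K₀)) (2 * K₀)
  obtain ⟨D₂, hD₂⟩ := hL.exists_measure_ball_mul_le (K₀ * (c + 1))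
  refine ⟨D₁ * D₂, fun R hR S hS y ↦ ?_⟩
  have := hS.countable hX hL hR
  have hr : 0 < R / (2 * K₀) := by positivity
  have hterm : ∀ z : S, (ball ρ (z : X) (c * R)).indicator (1 : X → ℝ≥0∞) y * μ (ball ρ y R) ≤
      D₁ * μ (ball ρ (z : X) (R / (2 * K₀)) ∩ ball ρ y (K₀ * (c + 1) * R)) := by
    intro z
    by_cases hz : y ∈ ball ρ (z : X) (c * R)
    · have hyz : ρ y z ≤ c * R := (hX.symm y z).trans_le (le_of_lt hz)
      rw [indicator_of_mem hz, Pi.one_apply, one_mul, inter_eq_left.2]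
      · convert hD₁ y z _ hr (by convert hyz using 1; field_simp) using 3
        field_simp
      · refine hX.ball_subset hyz ?_
        have : R / (2 * K₀) ≤ R := div_le_self hR.le (by linarith)
        calc K₀ * (c * R + R / (2 * K₀)) ≤ K₀ * (c * R + R) := by gcongr
          _ = K₀ * (c + 1) * R := by ring
    · simp [hz]
  have hB := hL.measure_ball_ne_zero y hR
  rw [← ENNReal.mul_le_mul_iff_left hB (hL.measure_ball_ne_top y hR), ← ENNReal.tsum_mul_right]
  calc ∑' z : S, (ball ρ (z : X) (c * R)).indicator (1 : X → ℝ≥0∞) y * μ (ball ρ y R)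
      ≤ ∑' z : S, D₁ * μ (ball ρ (z : X) (R / (2 * K₀)) ∩ ball ρ y (K₀ * (c + 1) * R)) :=
        ENNReal.tsum_le_tsum hterm
    _ ≤ D₁ * μ (ball ρ y (K₀ * (c + 1) * R)) := by
        rw [ENNReal.tsum_mul_left, ← measure_iUnion
          (fun z w hzw ↦
            (hS.pairwise_disjoint_ball hX hzw).mono inter_subset_left inter_subset_left)
          fun z ↦ (hX.measurableSet_ball _ _).inter (hX.measurableSet_ball _ _)]
        gcongr
        exact iUnion_subset fun z ↦ inter_subset_right
    _ ≤ ↑(D₁ * D₂) * μ (ball ρ y R) := by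
        rw [ENNReal.coe_mul, mul_assoc (D₁ : ℝ≥0∞)]
        exact mul_le_mul_right (hD₂ y R hR) _

lemma exists_tsum_setLIntegral_ball_le (hX : IsQuasiMetricMeasure ρ μ K₀)
    (hL : IsDoubling ρ μ L) (c : ℝ) :
    ∃ D : ℝ≥0, ∀ R, 0 < R → ∀ S, IsNet ρ R S → ∀ F : X → ℝ≥0∞, Measurable F →
      ∑' z : S, ∫⁻ y in ball ρ (z : X) (c * R), F y ∂μ ≤ D * ∫⁻ y, F y ∂μ := by
  obtain ⟨D, hD⟩ := exists_tsum_indicator_ball_le hX hL c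
  refine ⟨D, fun R hR S hS F hF ↦ ?_⟩
  have := hS.countable hX hL hR
  calc ∑' z : S, ∫⁻ y in ball ρ (z : X) (c * R), F y ∂μ
      = ∫⁻ y, ∑' z : S, (ball ρ (z : X) (c * R)).indicator F y ∂μ := by
        rw [lintegral_tsum fun z ↦ (hF.indicator (hX.measurableSet_ball _ _)).aemeasurable]
        simp_rw [lintegral_indicator (hX.measurableSet_ball _ _)]
    _ ≤ ∫⁻ y, D * F y ∂μ := by
        refine lintegral_mono fun y ↦ ?_
        have hind : ∀ z : S, (ball ρ (z : X) (c * R)).indicator F y =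
            (ball ρ (z : X) (c * R)).indicator 1 y * F y := fun z ↦ by
          simpa using indicator_mul_left (ball ρ (z : X) (c * R)) 1 F
        simp_rw [hind, ENNReal.tsum_mul_right]
        gcongr
        exact hD R hR S hS y
    _ = D * ∫⁻ y, F y ∂μ := lintegral_const_mul _ hF

end Geometry

/-! ### Muckenhoupt weights -/

section Weights

lemma rpow_lintegral_le_lintegral_mul_dual {ν : Measure X} {h ω : X → ℝ≥0∞} (hh : Measurable h)
    (hω : Measurable ω) (hω0 : ∀ᵐ y ∂ν, ω y ≠ 0) (hω_top : ∀ᵐ y ∂ν, ω y ≠ ∞) {t : ℝ}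
    (ht : 1 < t) :
    (∫⁻ y, h y ∂ν) ^ t ≤
      (∫⁻ y, h y ^ t * ω y ∂ν) * (∫⁻ y, ω y ^ (1 / (1 - t)) ∂ν) ^ (t - 1) := by
  have ht0 : 0 < t := by linarith
  have hsplit : ∫⁻ y, h y ∂ν = ∫⁻ y, h y * ω y ^ (1 / t) * ω y ^ (-(1 / t)) ∂ν := by
    refine lintegral_congr_ae ?_
    filter_upwards [hω0, hω_top] with y hy0 hy_top
    rw [mul_assoc, ← ENNReal.rpow_add _ _ hy0 hy_top]
    simp
  have hfirst : ∀ y, (h y * ω y ^ (1 / t)) ^ t = h y ^ t * ω y := fun y ↦ by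
    rw [ENNReal.mul_rpow_of_nonneg _ _ ht0.le, ← ENNReal.rpow_mul,
      one_div_mul_cancel ht0.ne', ENNReal.rpow_one]
  have hsecond : ∀ y, (ω y ^ (-(1 / t))) ^ (t / (t - 1)) = ω y ^ (1 / (1 - t)) := fun y ↦ by
    have ht1 : t - 1 ≠ 0 := by linarith
    rw [← ENNReal.rpow_mul, ← neg_sub t 1]
    congr 1
    field_simp
  have hHolder := lintegral_mul_rpow_le (hh.mul (hω.pow_const (1 / t))).aemeasurable
    (hω.pow_const (-(1 / t))).aemeasurable ht (ν := ν)
  simpa only [Pi.mul_apply, hfirst, hsecond, ← hsplit] using hHolder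

lemma lintegral_eq_zero_of_lintegral_rpow_neg_eq_zero {ν : Measure X} {ω : X → ℝ≥0∞}
    (hω : Measurable ω) {e : ℝ} (he : e < 0) (hdual : ∫⁻ y, ω y ^ e ∂ν = 0)
    {h : X → ℝ≥0∞} (hh : Measurable h) {t : ℝ} (ht : 0 < t)
    (hint : ∫⁻ y, h y ^ t * ω y ∂ν ≠ ∞) : ∫⁻ y, h y ∂ν = 0 := by
  have hω_top : ∀ᵐ y ∂ν, ω y = ∞ := by
    filter_upwards [(lintegral_eq_zero_iff (hω.pow_const e)).1 hdual] with y hy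
    exact ((ENNReal.rpow_eq_zero_iff.1 hy).resolve_left fun h ↦ he.not_gt h.2).1
  refine lintegral_eq_zero_of_ae_eq_zero ?_
  filter_upwards [hω_top, ae_lt_top ((hh.pow_const t).mul hω) hint] with y hy hlt
  by_contra hne
  simp_all [ENNReal.mul_top, ht.not_gt]

lemma rpow_lintegral_mul_lintegral_le_of_dual {ν : Measure X} {ω : X → ℝ≥0∞}
    (hω : Measurable ω) {t : ℝ} (ht : 1 < t) {A : ℝ≥0}
    (hA : (∫⁻ y, ω y ∂ν) * (∫⁻ y, ω y ^ (1 / (1 - t)) ∂ν) ^ (t - 1) ≤ A)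
    {h : X → ℝ≥0∞} (hh : Measurable h) :
    (∫⁻ y, h y ∂ν) ^ t * ∫⁻ y, ω y ∂ν ≤ (A + 1) * ∫⁻ y, h y ^ t * ω y ∂ν := by
  have ht0 : 0 < t := by linarith
  have ht1 : 0 < t - 1 := by linarith
  have hneg : 1 / (1 - t) < 0 := div_neg_of_pos_of_neg one_pos (by linarith)
  have hA_top := hA.trans_lt ENNReal.coe_lt_top
  have hω' : Measurable fun y ↦ ω y ^ (1 / (1 - t)) := hω.pow_const _
  rcases eq_or_ne (∫⁻ y, h y ^ t * ω y ∂ν) ∞ with hint | hint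
  · simp [hint, ENNReal.mul_top]
  rcases eq_or_ne (∫⁻ y, ω y ^ (1 / (1 - t)) ∂ν) 0 with hdual | hdual
  · simp [lintegral_eq_zero_of_lintegral_rpow_neg_eq_zero hω hneg hdual hh ht0 hint, ht0]
  rcases eq_or_ne (∫⁻ y, ω y ^ (1 / (1 - t)) ∂ν) ∞ with hdual' | hdual'
  · have hω_int : ∫⁻ y, ω y ∂ν = 0 := by
      by_contra hne
      rw [hdual', ENNReal.top_rpow_of_pos ht1, ENNReal.mul_top hne] at hA_top
      exact lt_irrefl _ hA_top
    simp [hω_int]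
  have hω0 : ∀ᵐ y ∂ν, ω y ≠ 0 := by
    filter_upwards [ae_lt_top hω' hdual'] with y hlt hy
    rw [hy, ENNReal.zero_rpow_of_neg hneg] at hlt
    exact lt_irrefl _ hlt
  have hω_top : ∀ᵐ y ∂ν, ω y ≠ ∞ := by
    refine (ae_lt_top hω fun hω_int ↦ ?_).mono fun _ hy ↦ hy.ne
    rw [hω_int, ENNReal.top_mul (ENNReal.rpow_pos hdual.bot_lt hdual').ne'] at hA_top
    exact lt_irrefl _ hA_top
  calc (∫⁻ y, h y ∂ν) ^ t * ∫⁻ y, ω y ∂ν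
      ≤ (∫⁻ y, h y ^ t * ω y ∂ν) * (∫⁻ y, ω y ^ (1 / (1 - t)) ∂ν) ^ (t - 1) *
          ∫⁻ y, ω y ∂ν := by
        gcongr
        exact rpow_lintegral_le_lintegral_mul_dual hh hω hω0 hω_top ht
    _ = ((∫⁻ y, ω y ∂ν) * (∫⁻ y, ω y ^ (1 / (1 - t)) ∂ν) ^ (t - 1)) *
          ∫⁻ y, h y ^ t * ω y ∂ν := by ring
    _ ≤ (A + 1) * ∫⁻ y, h y ^ t * ω y ∂ν := by
        gcongr
        exact hA.trans le_self_add

/- The summand `1` matters when the lower bound of `ω` is `∞`: the quotient is then `0`. -/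
lemma lintegral_mul_lintegral_le_of_div_le {ν : Measure X} {ω : X → ℝ≥0∞} {e : ℝ≥0∞}
    (he : ∀ᵐ y ∂ν, e ≤ ω y) {A : ℝ≥0} (hA : (∫⁻ y, ω y ∂ν) / e ≤ A)
    {h : X → ℝ≥0∞} (hh : Measurable h) :
    (∫⁻ y, h y ∂ν) * ∫⁻ y, ω y ∂ν ≤ (A + 1) * ∫⁻ y, h y * ω y ∂ν := by
  have hint : (∫⁻ y, h y ∂ν) * e ≤ ∫⁻ y, h y * ω y ∂ν := by
    rw [← lintegral_mul_const _ hh]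
    exact lintegral_mono_ae (he.mono fun y hy ↦ mul_le_mul_right hy _)
  rcases eq_or_ne e 0 with rfl | he0
  · have hω : ∫⁻ y, ω y ∂ν = 0 := by
      by_contra hne
      simp [ENNReal.div_zero hne] at hA
    simp [hω]
  rcases eq_or_ne e ∞ with rfl | he_top
  · rcases eq_or_ne (∫⁻ y, h y ∂ν) 0 with hh0 | hh0
    · simp [hh0]
    · rw [ENNReal.mul_top hh0, top_le_iff] at hint
      simp [hint, ENNReal.mul_top]
  calc (∫⁻ y, h y ∂ν) * ∫⁻ y, ω y ∂ν
      ≤ (∫⁻ y, h y ∂ν) * (A * e) := by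
        gcongr
        exact (ENNReal.div_le_iff he0 he_top).1 hA
    _ = A * ((∫⁻ y, h y ∂ν) * e) := by ring
    _ ≤ (A + 1) * ∫⁻ y, h y * ω y ∂ν := by
        gcongr
        exact le_self_add

/-- The Muckenhoupt condition of exponent `t` in Jensen form: averages over balls are bounded, up
to the constant `C`, by weighted `L^t` averages. Unlike the `A_t` characteristics it makes sense
uniformly for all `t > 0`. -/
def MuckenhouptBound (ρ : X → X → ℝ) (μ : Measure X) (ω : X → ℝ≥0∞) (t : ℝ) (C : ℝ≥0) : Prop :=
  ∀ (x : X) (R : ℝ), 0 < R → ∀ h : X → ℝ≥0∞, Measurable h →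
    (⨍⁻ y in ball ρ x R, h y ∂μ) ^ t * ⨍⁻ y in ball ρ x R, ω y ∂μ ≤
      C * ⨍⁻ y in ball ρ x R, h y ^ t * ω y ∂μ

variable {ρ : X → X → ℝ} {μ : Measure X} {K₀ : ℝ} {L : ℝ≥0∞} {ω : X → ℝ≥0∞} {t : ℝ} {C : ℝ≥0}

lemma MuckenhouptBound.of_A1Const (hA : A1Const ρ μ ω < ∞) :
    ∃ C, MuckenhouptBound ρ μ ω 1 C := by
  lift A1Const ρ μ ω to ℝ≥0 using hA.ne with A hA'
  refine ⟨A + 1, fun x R hR h hh ↦ ?_⟩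
  have he : ∀ᵐ y ∂((μ.restrict (ball ρ x R)) univ)⁻¹ • μ.restrict (ball ρ x R),
      essInf ω (μ.restrict (ball ρ x R)) ≤ ω y :=
    Measure.smul_absolutelyContinuous.ae_le ae_essInf_le
  have hquot : (⨍⁻ y in ball ρ x R, ω y ∂μ) / essInf ω (μ.restrict (ball ρ x R)) ≤ A := by
    rw [setLAverage_eq, hA']
    exact le_iSup_of_le x (le_iSup₂_of_le R hR le_rfl)
  simp only [ENNReal.rpow_one]
  exact_mod_cast lintegral_mul_lintegral_le_of_div_le he hquot hh

lemma MuckenhouptBound.of_ApConst (hω : Measurable ω) (ht : 1 < t) (hA : ApConst ρ μ ω t < ∞) :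
    ∃ C, MuckenhouptBound ρ μ ω t C := by
  lift ApConst ρ μ ω t to ℝ≥0 using hA.ne with A hA'
  refine ⟨A + 1, fun x R hR h hh ↦ ?_⟩
  have hdual : (⨍⁻ y in ball ρ x R, ω y ∂μ) *
      (⨍⁻ y in ball ρ x R, ω y ^ (1 / (1 - t)) ∂μ) ^ (t - 1) ≤ A := by
    rw [setLAverage_eq, setLAverage_eq, hA']
    exact le_iSup_of_le x (le_iSup₂_of_le R hR le_rfl)
  exact_mod_cast rpow_lintegral_mul_lintegral_le_of_dual hω ht hdual hh

lemma MuckenhouptBound.mono_exponent (h : MuckenhouptBound ρ μ ω t C) (ht : 0 < t) {t' : ℝ}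
    (htt' : t ≤ t') : MuckenhouptBound ρ μ ω t' C := by
  intro x R hR g hg
  have hmul : t' / t * t = t' := div_mul_cancel₀ t' ht.ne'
  calc (⨍⁻ y in ball ρ x R, g y ∂μ) ^ t' * ⨍⁻ y in ball ρ x R, ω y ∂μ
      = ((⨍⁻ y in ball ρ x R, g y ∂μ) ^ (t' / t)) ^ t * ⨍⁻ y in ball ρ x R, ω y ∂μ := by
        rw [← ENNReal.rpow_mul, hmul]
    _ ≤ (⨍⁻ y in ball ρ x R, g y ^ (t' / t) ∂μ) ^ t * ⨍⁻ y in ball ρ x R, ω y ∂μ := by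
        gcongr
        exact rpow_laverage_le hg.aemeasurable ((one_le_div ht).2 htt')
    _ ≤ C * ⨍⁻ y in ball ρ x R, (g y ^ (t' / t)) ^ t * ω y ∂μ := h x R hR _ (hg.pow_const _)
    _ = C * ⨍⁻ y in ball ρ x R, g y ^ t' * ω y ∂μ := by simp_rw [← ENNReal.rpow_mul, hmul]

lemma MuckenhouptBound.rpow_setLAverage_mul_le (h : MuckenhouptBound ρ μ ω t C)
    (hL : IsDoubling ρ μ L) (x : X) {R : ℝ} (hR : 0 < R) {g : X → ℝ≥0∞} (hg : Measurable g) :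
    (⨍⁻ y in ball ρ x R, g y ∂μ) ^ t * ∫⁻ y in ball ρ x R, ω y ∂μ ≤
      C * ∫⁻ y in ball ρ x R, g y ^ t * ω y ∂μ := by
  have hB := hL.measure_ball_ne_top x hR
  rw [← measure_mul_setLAverage ω hB, ← measure_mul_setLAverage _ hB, mul_left_comm,
    mul_left_comm (C : ℝ≥0∞)]
  exact mul_le_mul_right (h x R hR g hg) _

lemma MuckenhouptBound.setLIntegral_ball_le (h : MuckenhouptBound ρ μ ω t C)
    (hL : IsDoubling ρ μ L) (ht : 0 < t) {x : X} {R : ℝ} (hR : 0 < R) {E : Set X}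
    (hE : MeasurableSet E) (hEB : E ⊆ ball ρ x R) {D : ℝ≥0} (hD : μ (ball ρ x R) ≤ D * μ E) :
    ∫⁻ y in ball ρ x R, ω y ∂μ ≤ C * D ^ t * ∫⁻ y in E, ω y ∂μ := by
  have hone : 1 ≤ D * ⨍⁻ y in ball ρ x R, E.indicator 1 y ∂μ := by
    rw [setLAverage_eq, lintegral_indicator_one hE, Measure.restrict_apply hE,
      inter_eq_left.2 hEB, ← mul_div_assoc,
      ENNReal.le_div_iff_mul_le (.inl (hL.measure_ball_ne_zero x hR))
        (.inl (hL.measure_ball_ne_top x hR)), one_mul]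
    exact hD
  have hind : ∀ y, E.indicator (1 : X → ℝ≥0∞) y ^ t * ω y ≤ E.indicator ω y := by
    intro y
    by_cases hy : y ∈ E <;> simp [hy, ht]
  calc ∫⁻ y in ball ρ x R, ω y ∂μ
      ≤ (D * ⨍⁻ y in ball ρ x R, E.indicator 1 y ∂μ) ^ t * ∫⁻ y in ball ρ x R, ω y ∂μ :=
        le_mul_of_one_le_left' (ENNReal.one_le_rpow hone ht)
    _ = D ^ t * ((⨍⁻ y in ball ρ x R, E.indicator 1 y ∂μ) ^ t * ∫⁻ y in ball ρ x R, ω y ∂μ) := by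
        rw [ENNReal.mul_rpow_of_nonneg _ _ ht.le, mul_assoc]
    _ ≤ D ^ t * (C * ∫⁻ y in ball ρ x R, E.indicator 1 y ^ t * ω y ∂μ) := by
        exact mul_le_mul_right
          (h.rpow_setLAverage_mul_le hL x hR (measurable_one.indicator hE)) _
    _ ≤ D ^ t * (C * ∫⁻ y, E.indicator ω y ∂μ) := by
        gcongr with y
        · exact Measure.restrict_le_self
        · exact hind y
    _ = C * D ^ t * ∫⁻ y in E, ω y ∂μ := by rw [lintegral_indicator hE]; ring

/- The average `x ↦ ⨍⁻ y in ball ρ x R, h y ∂μ` need not be measurable, so it is replaced by a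
measurable majorant built from a net. -/
lemma MuckenhouptBound.exists_measurable_majorant (hω : MuckenhouptBound ρ μ ω t C)
    (hX : IsQuasiMetricMeasure ρ μ K₀) (hL : IsDoubling ρ μ L) (hωm : Measurable ω)
    (ht : 0 < t) :
    ∃ C' : ℝ≥0, ∀ R, 0 < R → ∀ h : X → ℝ≥0∞, Measurable h →
      ∃ T : X → ℝ≥0∞, Measurable T ∧ (∀ x, ⨍⁻ y in ball ρ x R, h y ∂μ ≤ T x) ∧
        ∫⁻ x, T x ^ t * ω x ∂μ ≤ C' * ∫⁻ x, h x ^ t * ω x ∂μ := by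
  have hK := hX.one_le
  obtain ⟨D₁, hD₁⟩ := exists_setLAverage_ball_le hX hL
  obtain ⟨D₂, hD₂⟩ := exists_tsum_setLIntegral_ball_le hX hL (2 * K₀)
  refine ⟨D₁ ^ t * C * D₂, fun R hR h hh ↦ ?_⟩
  obtain ⟨S, hS⟩ := hX.exists_isNet hR
  have := hS.countable hX hL hR
  have hKR : 0 < 2 * K₀ * R := by positivity
  set a : X → ℝ≥0∞ := fun z ↦ (D₁ * ⨍⁻ y in ball ρ z (2 * K₀ * R), h y ∂μ) ^ t
  have ha : ∀ z, a z * ∫⁻ x in ball ρ z R, ω x ∂μ ≤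
      D₁ ^ t * C * ∫⁻ x in ball ρ z (2 * K₀ * R), h x ^ t * ω x ∂μ := by
    intro z
    simp only [a]
    rw [ENNReal.mul_rpow_of_nonneg _ _ ht.le, mul_assoc (_ ^ t), mul_assoc (_ ^ t)]
    refine mul_le_mul_right (le_trans ?_ (hω.rpow_setLAverage_mul_le hL z hKR hh)) _
    exact mul_le_mul_right (lintegral_mono_set (ball_subset_ball ρ z (by nlinarith))) _
  refine ⟨fun x ↦ (∑' z : S, (ball ρ (z : X) R).indicator (fun _ ↦ a z) x) ^ (1 / t),
    (Measurable.tsum fun z ↦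
      measurable_const.indicator (hX.measurableSet_ball _ _)).pow_const _, fun x ↦ ?_, ?_⟩
  · obtain ⟨z, hzS, hzx⟩ := hS.exists_mem_ball x
    refine (hD₁ z R hR x hzx h).trans ?_
    rw [one_div, ENNReal.le_rpow_inv_iff ht]
    refine le_trans ?_ (ENNReal.le_tsum ⟨z, hzS⟩)
    rw [indicator_of_mem hzx]
  simp_rw [← ENNReal.rpow_mul, one_div_mul_cancel ht.ne', ENNReal.rpow_one]
  calc ∫⁻ x, (∑' z : S, (ball ρ (z : X) R).indicator (fun _ ↦ a z) x) * ω x ∂μ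
      = ∑' z : S, a z * ∫⁻ x in ball ρ (z : X) R, ω x ∂μ :=
        lintegral_tsum_indicator_mul (fun z ↦ hX.measurableSet_ball _ _) _ hωm
    _ ≤ ∑' z : S, D₁ ^ t * C * ∫⁻ x in ball ρ (z : X) (2 * K₀ * R), h x ^ t * ω x ∂μ :=
        ENNReal.tsum_le_tsum fun z ↦ ha z
    _ ≤ D₁ ^ t * C * (D₂ * ∫⁻ x, h x ^ t * ω x ∂μ) := by
        rw [ENNReal.tsum_mul_left]
        exact mul_le_mul_right (hD₂ R hR S hS _ ((hh.pow_const _).mul hωm)) _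
    _ = ↑(D₁ ^ t * C * D₂) * ∫⁻ x, h x ^ t * ω x ∂μ := by
        push_cast [ENNReal.coe_rpow_of_nonneg _ ht.le]
        ring

end Weights

/-! ### The energy and its upper bound -/

section UpperBound

/-- The integral whose `1 / q`-th power is the Maz'ya–Shaposhnikova integrand `sob`, as a function
of the total exponent `σ = s * q` of the distance. -/
def energy (ρ : X → X → ℝ) (μ : Measure X) (E : Set X) (f : X → ℝ) (q σ : ℝ) (x : X) : ℝ≥0∞ :=
  ∫⁻ y in E, ENNReal.ofReal |f x - f y| ^ q / (U ρ μ x y * ENNReal.ofReal (ρ x y) ^ σ) ∂μ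

variable {ρ : X → X → ℝ} {μ : Measure X} {K₀ : ℝ} {L : ℝ≥0∞} {ω : X → ℝ≥0∞} {q t : ℝ} {C : ℝ≥0}

lemma energy_inter_ball_one_le (hX : IsQuasiMetricMeasure ρ μ K₀) {E : Set X}
    (hE : MeasurableSet E) (f : X → ℝ) (q : ℝ) {σ σ₀ : ℝ} (hσ : σ ≤ σ₀) (x : X) :
    energy ρ μ (E ∩ ball ρ x 1) f q σ x ≤ energy ρ μ E f q σ₀ x := by
  refine (setLIntegral_mono' (hE.inter (hX.measurableSet_ball x 1)) ?_).trans
    (lintegral_mono_set inter_subset_left)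
  rintro y ⟨-, hy : ρ x y < 1⟩
  gcongr _ / (_ * ?_)
  exact ENNReal.rpow_le_rpow_of_exponent_ge (ENNReal.ofReal_le_one.2 hy.le) hσ

lemma energy_le_add_tsum_annulus (ρ : X → X → ℝ) (μ : Measure X) (E : Set X) (f : X → ℝ)
    (q σ : ℝ) (x : X) :
    energy ρ μ E f q σ x ≤ energy ρ μ (E ∩ ball ρ x 1) f q σ x +
      ∑' n : ℕ, energy ρ μ (E ∩ annulus ρ x (2 ^ n) (2 * 2 ^ n)) f q σ x := by
  have hcover : E ⊆ (E ∩ ball ρ x 1) ∪ ⋃ n : ℕ, E ∩ annulus ρ x (2 ^ n) (2 * 2 ^ n) := by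
    rw [← inter_iUnion, ← inter_union_distrib_left]
    exact subset_inter subset_rfl fun y _ ↦
      (em (y ∈ ball ρ x 1)).imp_right fun hy ↦ compl_ball_one_subset_iUnion_annulus ρ x hy
  calc energy ρ μ E f q σ x
      ≤ energy ρ μ ((E ∩ ball ρ x 1) ∪ ⋃ n : ℕ, E ∩ annulus ρ x (2 ^ n) (2 * 2 ^ n)) f q σ x :=
        lintegral_mono_set hcover
    _ ≤ energy ρ μ (E ∩ ball ρ x 1) f q σ x +
          energy ρ μ (⋃ n : ℕ, E ∩ annulus ρ x (2 ^ n) (2 * 2 ^ n)) f q σ x :=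
        lintegral_union_le _ _ _
    _ ≤ _ := by
        gcongr
        exact lintegral_iUnion_le _ _

lemma exists_inv_U_mul_rpow_le (hX : IsQuasiMetricMeasure ρ μ K₀) (hL : IsDoubling ρ μ L) :
    ∃ D : ℝ≥0, ∀ x r, 0 < r → ∀ y ∈ annulus ρ x r (2 * r), ∀ σ : ℝ, 0 ≤ σ →
      (U ρ μ x y * ENNReal.ofReal (ρ x y) ^ σ)⁻¹ ≤
        D * ENNReal.ofReal r ^ (-σ) * (μ (ball ρ x (2 * r)))⁻¹ := by
  obtain ⟨D, hD⟩ := exists_measure_ball_rho_le_mul_U hX hL 2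
  refine ⟨D, fun x r hr y hy σ hσ ↦ ?_⟩
  have hry : r ≤ ρ x y := hy.1
  have hρ : 0 < ρ x y := hr.trans_le hry
  have hxy : x ≠ y := fun h ↦ hρ.ne' ((hX.eq_zero_iff x y).2 h)
  have hU : (U ρ μ x y)⁻¹ ≤ D * (μ (ball ρ x (2 * r)))⁻¹ :=
    inv_le_mul_inv_of_le_mul (hL.measure_ball_ne_zero x (by positivity))
      ((measure_mono (ball_subset_ball ρ x (by gcongr))).trans (hD x y hxy))
  have hρσ : ENNReal.ofReal (ρ x y) ^ σ ≠ 0 :=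
    (ENNReal.rpow_pos (ENNReal.ofReal_pos.2 hρ) ENNReal.ofReal_ne_top).ne'
  rw [ENNReal.mul_inv (.inr (ENNReal.rpow_ne_top_of_nonneg hσ ENNReal.ofReal_ne_top)) (.inr hρσ),
    ← ENNReal.rpow_neg, mul_right_comm]
  gcongr ?_ * ?_
  rw [ENNReal.rpow_neg, ENNReal.rpow_neg]
  gcongr

lemma exists_energy_annulus_le (hX : IsQuasiMetricMeasure ρ μ K₀) (hL : IsDoubling ρ μ L)
    (hq : 0 ≤ q) :
    ∃ D : ℝ≥0, ∀ E, MeasurableSet E → ∀ f : X → ℝ, Measurable f → ∀ σ, 0 ≤ σ → ∀ x r, 0 < r →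
      energy ρ μ (E ∩ annulus ρ x r (2 * r)) f q σ x ≤
        D * (ENNReal.ofReal r ^ (-σ) * (ENNReal.ofReal |f x| ^ q +
          ⨍⁻ y in ball ρ x (2 * r), E.indicator (fun y ↦ ENNReal.ofReal |f y| ^ q) y ∂μ)) := by
  obtain ⟨D, hD⟩ := exists_inv_U_mul_rpow_le hX hL
  refine ⟨2 ^ q * D, fun E hE f hf σ hσ x r hr ↦ ?_⟩
  set g : X → ℝ≥0∞ := fun y ↦ ENNReal.ofReal |f y| ^ q
  have hgm : Measurable (E.indicator g) := (hf.abs.ennreal_ofReal.pow_const q).indicator hE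
  have hB0 := hL.measure_ball_ne_zero x (r := 2 * r) (by positivity)
  have hB := hL.measure_ball_ne_top x (r := 2 * r) (by positivity)
  set V := μ (ball ρ x (2 * r))
  set c := 2 ^ q * D * ENNReal.ofReal r ^ (-σ) * V⁻¹
  calc energy ρ μ (E ∩ annulus ρ x r (2 * r)) f q σ x
      ≤ ∫⁻ y in E ∩ annulus ρ x r (2 * r), c * (g x + E.indicator g y) ∂μ := by
        refine setLIntegral_mono' (hE.inter (hX.measurableSet_annulus _ _ _)) fun y hy ↦ ?_
        rw [indicator_of_mem hy.1, div_eq_mul_inv]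
        have hfxy : ENNReal.ofReal |f x - f y| ^ q ≤ 2 ^ q * (g x + g y) := by
          simpa only [sub_eq_add_neg, abs_neg] using ofReal_abs_add_rpow_le (f x) (-f y) hq
        refine (mul_le_mul' hfxy (hD x r hr y hy.2 σ hσ)).trans_eq ?_
        ring
    _ ≤ ∫⁻ y in ball ρ x (2 * r), c * (g x + E.indicator g y) ∂μ :=
        lintegral_mono_set (inter_subset_right.trans (annulus_subset_ball ρ x r (2 * r)))
    _ = c * (g x * V + ∫⁻ y in ball ρ x (2 * r), E.indicator g y ∂μ) := by
        rw [lintegral_const_mul _ (hgm.const_add _), lintegral_add_left measurable_const,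
          setLIntegral_const]
    _ = 2 ^ q * D * (ENNReal.ofReal r ^ (-σ) *
          (g x + ⨍⁻ y in ball ρ x (2 * r), E.indicator g y ∂μ)) * (V⁻¹ * V) := by
        rw [← measure_mul_setLAverage _ hB]
        ring
    _ = _ := by
        rw [ENNReal.inv_mul_cancel hB0 hB, mul_one]
        push_cast [ENNReal.coe_rpow_of_nonneg _ hq]
        rfl

lemma exists_energy_le_add_tsum (hX : IsQuasiMetricMeasure ρ μ K₀) (hL : IsDoubling ρ μ L)
    (hq : 0 ≤ q) :
    ∃ D : ℝ≥0, ∀ E, MeasurableSet E → ∀ f : X → ℝ, Measurable f → ∀ σ σ₀, 0 ≤ σ → σ ≤ σ₀ → ∀ x,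
      energy ρ μ E f q σ x ≤ energy ρ μ E f q σ₀ x +
        D * ∑' n : ℕ, ENNReal.ofReal (2 ^ n) ^ (-σ) * (ENNReal.ofReal |f x| ^ q +
          ⨍⁻ y in ball ρ x (2 * 2 ^ n), E.indicator (fun y ↦ ENNReal.ofReal |f y| ^ q) y ∂μ) := by
  obtain ⟨D, hD⟩ := exists_energy_annulus_le hX hL hq
  refine ⟨D, fun E hE f hf σ σ₀ hσ hσσ₀ x ↦
    (energy_le_add_tsum_annulus ρ μ E f q σ x).trans (add_le_add
      (energy_inter_ball_one_le hX hE f q hσσ₀ x) ?_)⟩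
  rw [← ENNReal.tsum_mul_left]
  exact ENNReal.tsum_le_tsum fun n ↦ hD E hE f hf σ hσ x _ (by positivity)

lemma MuckenhouptBound.exists_lintegral_rpow_energy_le (hω : MuckenhouptBound ρ μ ω t C)
    (hX : IsQuasiMetricMeasure ρ μ K₀) (hL : IsDoubling ρ μ L) (hωm : Measurable ω)
    (hq : 0 ≤ q) (ht : 1 ≤ t) :
    ∃ C' : ℝ≥0, ∀ E, MeasurableSet E → ∀ f : X → ℝ, Measurable f → ∀ σ σ₀, 0 ≤ σ → σ ≤ σ₀ →
      ∫⁻ x in E, energy ρ μ E f q σ x ^ t * ω x ∂μ ≤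
        2 ^ t * ∫⁻ x in E, energy ρ μ E f q σ₀ x ^ t * ω x ∂μ +
          C' * (∑' n : ℕ, ENNReal.ofReal (2 ^ n) ^ (-σ)) ^ t *
            ∫⁻ x in E, (ENNReal.ofReal |f x| ^ q) ^ t * ω x ∂μ := by
  have ht0 : 0 < t := by linarith
  obtain ⟨D, hD⟩ := exists_energy_le_add_tsum hX hL hq
  obtain ⟨C₁, hC₁⟩ := hω.exists_measurable_majorant hX hL hωm ht0
  refine ⟨2 ^ t * D ^ t * (2 ^ t * (1 + C₁)), fun E hE f hf σ σ₀ hσ hσσ₀ ↦ ?_⟩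
  set g : X → ℝ≥0∞ := fun x ↦ ENNReal.ofReal |f x| ^ q
  have hgm : Measurable g := hf.abs.ennreal_ofReal.pow_const q
  choose T hTm hT hT_int using fun n : ℕ ↦ hC₁ (2 * 2 ^ n) (by positivity) _ (hgm.indicator hE)
  set a : ℕ → ℝ≥0∞ := fun n ↦ ENNReal.ofReal (2 ^ n) ^ (-σ)
  set I := ∫⁻ x in E, energy ρ μ E f q σ₀ x ^ t * ω x ∂μ
  set N := ∫⁻ x in E, g x ^ t * ω x ∂μ
  have hP : ∀ n, Measurable fun x ↦ g x + T n x := fun n ↦ hgm.add (hTm n)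
  have hP_int : ∀ n, ∫⁻ x in E, (g x + T n x) ^ t * ω x ∂μ ≤ 2 ^ t * (N + C₁ * N) := by
    intro n
    refine (lintegral_add_rpow_mul_le g (hTm n) hωm ht0.le).trans ?_
    gcongr
    exact (setLIntegral_le_lintegral _ _).trans
      ((hT_int n).trans_eq (by rw [lintegral_indicator_rpow_mul hE g ω ht0]))
  have hpt : ∀ x, energy ρ μ E f q σ x ≤
      energy ρ μ E f q σ₀ x + ∑' n, D * a n * (g x + T n x) := by
    intro x
    refine (hD E hE f hf σ σ₀ hσ hσσ₀ x).trans ?_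
    simp_rw [mul_assoc, ENNReal.tsum_mul_left]
    gcongr with n
    exact hT n x
  calc ∫⁻ x in E, energy ρ μ E f q σ x ^ t * ω x ∂μ
      ≤ ∫⁻ x in E, (energy ρ μ E f q σ₀ x + ∑' n, D * a n * (g x + T n x)) ^ t * ω x ∂μ := by
        gcongr with x
        exact hpt x
    _ ≤ 2 ^ t * (I + ∫⁻ x in E, (∑' n, D * a n * (g x + T n x)) ^ t * ω x ∂μ) :=
        lintegral_add_rpow_mul_le _ (.tsum fun n ↦ (hP n).const_mul _) hωm ht0.le
    _ ≤ 2 ^ t * (I + (∑' n, D * a n) ^ t * (2 ^ t * (N + C₁ * N))) := by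
        gcongr
        exact lintegral_rpow_tsum_mul_le hωm _ hP ht hP_int
    _ = 2 ^ t * I + ↑(2 ^ t * D ^ t * (2 ^ t * (1 + C₁))) * (∑' n, a n) ^ t * N := by
        rw [ENNReal.tsum_mul_left, ENNReal.mul_rpow_of_nonneg _ _ ht0.le]
        push_cast [ENNReal.coe_rpow_of_nonneg _ ht0.le]
        ring

lemma MuckenhouptBound.exists_limsup_energy_le (hω : MuckenhouptBound ρ μ ω t C)
    (hX : IsQuasiMetricMeasure ρ μ K₀) (hL : IsDoubling ρ μ L) (hωm : Measurable ω)
    (hq : 0 ≤ q) (ht : 1 ≤ t) :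
    ∃ C' : ℝ≥0, ∀ E, MeasurableSet E → ∀ f : X → ℝ, Measurable f → ∀ σ₀, 0 < σ₀ →
      ∫⁻ x in E, energy ρ μ E f q σ₀ x ^ t * ω x ∂μ ≠ ∞ →
      limsup (fun σ ↦ ENNReal.ofReal σ ^ t * ∫⁻ x in E, energy ρ μ E f q σ x ^ t * ω x ∂μ)
        (𝓝[>] 0) ≤ C' * ∫⁻ x in E, (ENNReal.ofReal |f x| ^ q) ^ t * ω x ∂μ := by
  have ht0 : 0 < t := by linarith
  obtain ⟨C₁, hC₁⟩ := hω.exists_lintegral_rpow_energy_le hX hL hωm hq ht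
  set K := (1 / Real.log 2 + 1).toNNReal
  refine ⟨C₁ * K ^ t, fun E hE f hf σ₀ hσ₀ hfin ↦ ?_⟩
  set I := ∫⁻ x in E, energy ρ μ E f q σ₀ x ^ t * ω x ∂μ
  set N := ∫⁻ x in E, (ENNReal.ofReal |f x| ^ q) ^ t * ω x ∂μ
  have hbound : ∀ᶠ σ in 𝓝[>] 0,
      ENNReal.ofReal σ ^ t * ∫⁻ x in E, energy ρ μ E f q σ x ^ t * ω x ∂μ ≤
        ENNReal.ofReal σ ^ t * (2 ^ t * I) + C₁ * K ^ t * N := by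
    filter_upwards [Ioo_mem_nhdsGT (lt_min hσ₀ one_pos)] with σ ⟨hσ, hσ_lt⟩
    have hσσ₀ : σ ≤ σ₀ := hσ_lt.le.trans (min_le_left _ _)
    have hσ1 : σ ≤ 1 := hσ_lt.le.trans (min_le_right _ _)
    have hgeom : ENNReal.ofReal σ * ∑' n : ℕ, ENNReal.ofReal (2 ^ n) ^ (-σ) ≤ K :=
      (ofReal_mul_tsum_rpow_neg_le one_lt_two hσ).trans (ENNReal.ofReal_le_ofReal (by gcongr))
    calc ENNReal.ofReal σ ^ t * ∫⁻ x in E, energy ρ μ E f q σ x ^ t * ω x ∂μ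
        ≤ ENNReal.ofReal σ ^ t *
            (2 ^ t * I + C₁ * (∑' n : ℕ, ENNReal.ofReal (2 ^ n) ^ (-σ)) ^ t * N) :=
          mul_le_mul_right (hC₁ E hE f hf σ σ₀ hσ.le hσσ₀) _
      _ = ENNReal.ofReal σ ^ t * (2 ^ t * I) +
            C₁ * (ENNReal.ofReal σ * ∑' n : ℕ, ENNReal.ofReal (2 ^ n) ^ (-σ)) ^ t * N := by
          rw [ENNReal.mul_rpow_of_nonneg _ _ ht0.le]
          ring
      _ ≤ _ := by gcongr
  have hvanish : Tendsto (fun σ ↦ ENNReal.ofReal σ ^ t * (2 ^ t * I)) (𝓝[>] 0) (𝓝 0) := by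
    have hpow : Tendsto (fun σ ↦ ENNReal.ofReal σ ^ t) (𝓝[>] 0) (𝓝 0) := by
      have := (ENNReal.continuous_ofReal.tendsto 0).ennrpow_const t
      simpa [ht0] using this.mono_left nhdsWithin_le_nhds
    simpa using ENNReal.Tendsto.mul_const hpow
      (.inr (ENNReal.mul_ne_top (ENNReal.rpow_ne_top_of_nonneg ht0.le (by simp)) hfin))
  calc _ ≤ limsup (fun σ ↦ ENNReal.ofReal σ ^ t * (2 ^ t * I) + C₁ * K ^ t * N) (𝓝[>] 0) :=
        limsup_le_limsup hbound
    _ = ↑(C₁ * K ^ t) * N := by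
        rw [(hvanish.add_const _).limsup_eq, zero_add]
        push_cast [ENNReal.coe_rpow_of_nonneg _ ht0.le]
        rfl

end UpperBound

/-! ### Thick annuli -/

section ThickAnnuli

variable {ρ : X → X → ℝ} {μ : Measure X} {K₀ : ℝ} {L : ℝ≥0∞} {Ω : Set X} {ω : X → ℝ≥0∞}
  {t Λ : ℝ} {C D : ℝ≥0} {x₀ : X}

/-- The set `Ω` carries a fixed fraction of the mass of every large ball around `x₀`, even after
the concentric ball smaller by the factor `Λ` is removed. -/
def HasThickAnnuli (ρ : X → X → ℝ) (μ : Measure X) (Ω : Set X) (x₀ : X) (Λ : ℝ) (D : ℝ≥0) :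
    Prop :=
  ∀ᶠ r in atTop, μ (ball ρ x₀ (Λ * r)) ≤ D * μ (Ω ∩ annulus ρ x₀ r (Λ * r))

lemma WRD.exists_eventually_measure_ball_le (h : WRD ρ μ) :
    ∃ x₀, ∀ ε : ℝ≥0, ε ≠ 0 → ∃ lam : ℝ, 1 ≤ lam ∧
      ∀ᶠ r in atTop, μ (ball ρ x₀ r) ≤ ε * μ (ball ρ x₀ (lam * r)) := by
  obtain ⟨x₀, lam, C, hlam, hC, hlim⟩ := h
  refine ⟨x₀, fun ε hε ↦ ?_⟩
  obtain ⟨a, ha1, ha⟩ := ENNReal.lt_iff_exists_nnreal_btwn.1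
    ((ENNReal.one_lt_ofReal.2 hC).trans_le hlim)
  have hstep : ∀ᶠ r in atTop, a * μ (ball ρ x₀ r) ≤ μ (ball ρ x₀ (lam * r)) :=
    (eventually_lt_of_lt_liminf ha).mono fun r hr ↦ ENNReal.mul_le_of_le_div hr.le
  have hiter : ∀ n : ℕ, ∀ᶠ r in atTop, a ^ n * μ (ball ρ x₀ r) ≤ μ (ball ρ x₀ (lam ^ n * r)) := by
    intro n
    induction n with
    | zero => simp
    | succ n ih =>
      have htend : Tendsto (fun r : ℝ ↦ lam ^ n * r) atTop atTop :=
        tendsto_id.const_mul_atTop (by positivity)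
      filter_upwards [ih, htend.eventually hstep] with r hr hr'
      calc (a : ℝ≥0∞) ^ (n + 1) * μ (ball ρ x₀ r) = a * (a ^ n * μ (ball ρ x₀ r)) := by ring
        _ ≤ a * μ (ball ρ x₀ (lam ^ n * r)) := by gcongr
        _ ≤ μ (ball ρ x₀ (lam * (lam ^ n * r))) := hr'
        _ = μ (ball ρ x₀ (lam ^ (n + 1) * r)) := by rw [pow_succ', mul_assoc]
  obtain ⟨n, hn⟩ := pow_unbounded_of_one_lt ε⁻¹ (ENNReal.one_lt_coe_iff.1 ha1)
  refine ⟨lam ^ n, one_le_pow₀ hlam.le, (hiter n).mono fun r hr ↦ ?_⟩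
  have hεa : (1 : ℝ≥0∞) ≤ ε * a ^ n := by
    exact_mod_cast (inv_le_iff_one_le_mul₀' hε.bot_lt).1 hn.le
  calc μ (ball ρ x₀ r) ≤ ε * a ^ n * μ (ball ρ x₀ r) := le_mul_of_one_le_left' hεa
    _ ≤ ε * μ (ball ρ x₀ (lam ^ n * r)) := by
        rw [mul_assoc]
        gcongr

lemma WMD.exists_eventually_mul_measure_ball_le (h : WMD ρ μ Ω) :
    ∃ x₁, ∃ c : ℝ≥0, c ≠ 0 ∧
      ∀ᶠ r in atTop, c * μ (ball ρ x₁ r) ≤ μ (ball ρ x₁ r ∩ Ω) := by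
  obtain ⟨x₁, C₀, hC₀, -, hlim⟩ := h
  obtain ⟨c, hc0, hc⟩ := ENNReal.lt_iff_exists_nnreal_btwn.1
    ((ENNReal.ofReal_pos.2 hC₀).trans_le hlim)
  exact ⟨x₁, c, (ENNReal.coe_pos.1 hc0).ne', (eventually_lt_of_lt_liminf hc).mono fun r hr ↦
    ENNReal.mul_le_of_le_div hr.le⟩

lemma le_measure_sdiff_of_add_self_le {s s' : Set X} {v : ℝ≥0∞} (hv : v ≠ ∞) (hs : v + v ≤ μ s)
    (hs' : μ s' ≤ v) : v ≤ μ (s \ s') :=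
  calc v = v + v - v := (ENNReal.add_sub_cancel_right hv).symm
    _ ≤ μ s - μ s' := tsub_le_tsub hs hs'
    _ ≤ μ (s \ s') := le_measure_sdiff

/- A ball around the center `x₁` of the density condition contains a fraction `c` of `Ω`, while a
much smaller ball around the center `x₀` of the reverse doubling condition can be made to have
at most half that mass. -/
lemma exists_hasThickAnnuli (hX : IsQuasiMetricMeasure ρ μ K₀) (hL : IsDoubling ρ μ L)
    (hWRD : WRD ρ μ) (hWMD : WMD ρ μ Ω) :
    ∃ x₀ Λ D, 1 < Λ ∧ HasThickAnnuli ρ μ Ω x₀ Λ D := by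
  have hK := hX.one_le
  obtain ⟨x₁, c, hc, hdens⟩ := hWMD.exists_eventually_mul_measure_ball_le
  obtain ⟨x₀, hx₀⟩ := hWRD.exists_eventually_measure_ball_le
  obtain ⟨lam, hlam, hsmall⟩ := hx₀ (c / 2) (by positivity)
  obtain ⟨D, hD⟩ := exists_measure_ball_le hX hL 1 (2 * K₀)
  set P := 2 * K₀ * lam
  have hP : 2 ≤ P := by nlinarith only [hK, hlam]
  refine ⟨x₀, 2 * K₀ * P, D * (c / 2)⁻¹, by nlinarith only [hK, hP], ?_⟩
  filter_upwards [hsmall, (tendsto_id.const_mul_atTop (by positivity : 0 < P)).eventually hdens,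
    eventually_ge_atTop (ρ x₀ x₁), eventually_gt_atTop 0] with r hr_small hr_dens hr_ge hr
  have hrP : r ≤ P * r := by nlinarith only [hP, hr]
  have hsub_P : ball ρ x₀ (lam * r) ⊆ ball ρ x₁ (P * r) := by
    refine hX.ball_subset ((hX.symm x₁ x₀).trans_le hr_ge) ?_
    calc K₀ * (r + lam * r) ≤ K₀ * (lam * r + lam * r) := by
          gcongr
          exact le_mul_of_one_le_left hr.le hlam
      _ = P * r := by simp only [P]; ring
  have hsub_Λ : ball ρ x₁ (P * r) ⊆ ball ρ x₀ (2 * K₀ * P * r) :=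
    hX.ball_subset (hr_ge.trans hrP) (by linarith)
  set V := μ (ball ρ x₁ (P * r))
  have hV : V ≠ ∞ := hL.measure_ball_ne_top x₁ (by positivity)
  have hhalf : ↑(c / 2) * V ≤ μ (Ω ∩ annulus ρ x₀ r (2 * K₀ * P * r)) := by
    refine (le_measure_sdiff_of_add_self_le (ENNReal.mul_ne_top ENNReal.coe_ne_top hV)
      (hr_dens.trans_eq' ?_) (hr_small.trans (mul_le_mul_right (measure_mono hsub_P) _))).trans
      (measure_mono ?_)
    · rw [← add_mul, ← ENNReal.coe_add, add_halves]
      rfl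
    · rintro y ⟨⟨hyP, hyΩ⟩, hyr⟩
      exact ⟨hyΩ, not_lt.1 hyr, hsub_Λ hyP⟩
  calc μ (ball ρ x₀ (2 * K₀ * P * r)) ≤ D * V := by
        simpa only [mul_assoc] using hD x₀ x₁ (P * r) (by positivity) (by linarith)
    _ ≤ D * (↑(c / 2)⁻¹ * μ (Ω ∩ annulus ρ x₀ r (2 * K₀ * P * r))) := by
        gcongr
        rw [ENNReal.coe_inv (by positivity)]
        exact (ENNReal.mul_le_iff_le_inv (by simpa using hc) ENNReal.coe_ne_top).1 hhalf
    _ = _ := by push_cast; ring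

lemma tendsto_setLIntegral_ball_atTop (hX : IsQuasiMetricMeasure ρ μ K₀) (ω : X → ℝ≥0∞) (x₀ : X) :
    Tendsto (fun R ↦ ∫⁻ y in ball ρ x₀ R, ω y ∂μ) atTop (𝓝 (∫⁻ y, ω y ∂μ)) := by
  have hcover : ⋃ R, ball ρ x₀ R = univ :=
    eq_univ_of_forall fun y ↦ mem_iUnion.2 ⟨ρ x₀ y + 1, lt_add_one (ρ x₀ y)⟩
  have h := tendsto_measure_iUnion_atTop (μ := μ.withDensity ω) (s := ball ρ x₀)
    fun _ _ ↦ ball_subset_ball ρ x₀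
  simpa only [Function.comp_def, hcover, withDensity_apply _ (hX.measurableSet_ball x₀ _),
    withDensity_apply _ MeasurableSet.univ, setLIntegral_univ] using h

lemma HasThickAnnuli.eventually_exists_pairwise_disjoint (hthick : HasThickAnnuli ρ μ Ω x₀ Λ D)
    (hX : IsQuasiMetricMeasure ρ μ K₀) (hΩ : MeasurableSet Ω) (hΛ : 1 < Λ) :
    ∀ᶠ R in atTop, ∃ E : ℕ → Set X, Pairwise (Function.onFun Disjoint E) ∧
      ∀ n, MeasurableSet (E n) ∧ E n ⊆ Ω ∩ ball ρ x₀ (Λ ^ (n + 1) * R) ∧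
        μ (ball ρ x₀ (Λ ^ (n + 1) * R)) ≤ D * μ (E n) := by
  filter_upwards [eventually_forall_ge_atTop.2 hthick, eventually_ge_atTop 0] with R hR hR0
  set r : ℕ → ℝ := fun n ↦ Λ ^ n * R
  have hr_mono : Monotone r := fun m n hmn ↦ by
    have := hΛ.le
    simp only [r]
    gcongr
  have hr_succ : ∀ n, Λ * r n = r (n + 1) := fun n ↦ by simp only [r]; ring
  have hRr : ∀ n, R ≤ r n := fun n ↦ by simpa [r] using hr_mono n.zero_le
  exact ⟨fun n ↦ Ω ∩ annulus ρ x₀ (r n) (r (n + 1)),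
    (pairwise_disjoint_annulus ρ x₀ hr_mono).mono fun _ _ h ↦
      h.mono inter_subset_right inter_subset_right,
    fun n ↦ ⟨hΩ.inter (hX.measurableSet_annulus _ _ _),
      inter_subset_inter_right _ (annulus_subset_ball _ _ _ _),
      by simpa only [hr_succ] using hR _ (hRr n)⟩⟩

/- Otherwise the weighted masses of the disjoint thick annuli would be summable and comparable to
the increasing weighted masses of the balls containing them. -/
lemma MuckenhouptBound.lintegral_eq_zero_or_top (hω : MuckenhouptBound ρ μ ω t C)
    (hX : IsQuasiMetricMeasure ρ μ K₀) (hL : IsDoubling ρ μ L) (ht : 0 < t)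
    (hΩ : MeasurableSet Ω) (hΛ : 1 < Λ) (hthick : HasThickAnnuli ρ μ Ω x₀ Λ D) :
    ∫⁻ y, ω y ∂μ = 0 ∨ ∫⁻ y, ω y ∂μ = ∞ := by
  refine or_iff_not_imp_right.2 fun hfin ↦ ?_
  obtain ⟨R, ⟨E, hE_disj, hE⟩, hR⟩ :=
    ((hthick.eventually_exists_pairwise_disjoint hX hΩ hΛ).and (eventually_gt_atTop 0)).exists
  have hball : ∀ n, ∫⁻ y in ball ρ x₀ (Λ ^ (n + 1) * R), ω y ∂μ ≤
      C * D ^ t * ∫⁻ y in E n, ω y ∂μ := fun n ↦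
    hω.setLIntegral_ball_le hL ht (mul_pos (pow_pos (one_pos.trans hΛ) _) hR) (hE n).1
      ((hE n).2.1.trans inter_subset_right) (hE n).2.2
  have hr_top : Tendsto (fun n : ℕ ↦ Λ ^ (n + 1) * R) atTop atTop :=
    ((tendsto_pow_atTop_atTop_of_one_lt hΛ).comp (tendsto_add_atTop_nat 1)).atTop_mul_const hR
  have hsum : ∑' n, ∫⁻ y in E n, ω y ∂μ ≠ ∞ := by
    rw [← lintegral_iUnion (fun n ↦ (hE n).1) hE_disj]
    exact ((setLIntegral_le_lintegral _ _).trans_lt (lt_top_iff_ne_top.2 hfin)).ne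
  have hzero : Tendsto (fun n ↦ C * D ^ t * ∫⁻ y in E n, ω y ∂μ) atTop (𝓝 0) := by
    simpa using ENNReal.Tendsto.const_mul (ENNReal.tendsto_atTop_zero_of_tsum_ne_top hsum)
      (.inr (ENNReal.mul_ne_top ENNReal.coe_ne_top
        (ENNReal.rpow_ne_top_of_nonneg ht.le ENNReal.coe_ne_top)))
  exact le_antisymm (le_of_tendsto_of_tendsto ((tendsto_setLIntegral_ball_atTop hX ω x₀).comp
    hr_top) hzero (.of_forall hball)) zero_le

lemma MuckenhouptBound.eventually_setLAverage_le (hω : MuckenhouptBound ρ μ ω t C)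
    (hX : IsQuasiMetricMeasure ρ μ K₀) (hL : IsDoubling ρ μ L) (ht : 0 < t)
    (hω_top : ∫⁻ y, ω y ∂μ = ∞) (x₀ : X) {h : X → ℝ≥0∞} (hh : Measurable h)
    (hfin : ∫⁻ y, h y ^ t * ω y ∂μ ≠ ∞) {ε : ℝ≥0∞} (hε : ε ≠ 0) :
    ∀ᶠ R in atTop, ⨍⁻ y in ball ρ x₀ R, h y ∂μ ≤ ε := by
  set N := ∫⁻ y, h y ^ t * ω y ∂μ
  have hCN : C * N ≠ ∞ := ENNReal.mul_ne_top ENNReal.coe_ne_top hfin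
  have hεt : ε ^ t ≠ 0 := by simp [ENNReal.rpow_eq_zero_iff, hε, ht.not_gt]
  have hlarge : ∀ᶠ R in atTop, C * N / ε ^ t < ∫⁻ y in ball ρ x₀ R, ω y ∂μ :=
    (tendsto_setLIntegral_ball_atTop hX ω x₀).eventually_const_lt
      (hω_top ▸ (ENNReal.div_ne_top hCN hεt).lt_top)
  filter_upwards [hlarge, eventually_gt_atTop 0] with R hR hR0
  by_contra! hlt
  refine hR.not_ge ((ENNReal.le_div_iff_mul_le (.inl hεt) (.inr hCN)).2 ?_)
  calc (∫⁻ y in ball ρ x₀ R, ω y ∂μ) * ε ^ t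
      ≤ (⨍⁻ y in ball ρ x₀ R, h y ∂μ) ^ t * ∫⁻ y in ball ρ x₀ R, ω y ∂μ := by
        rw [mul_comm]
        gcongr
    _ ≤ C * ∫⁻ y in ball ρ x₀ R, h y ^ t * ω y ∂μ := hω.rpow_setLAverage_mul_le hL x₀ hR0 hh
    _ ≤ C * N := mul_le_mul_right (setLIntegral_le_lintegral _ _) _

end ThickAnnuli

/-! ### The lower bound for the energy -/

section LowerBound

variable {ρ : X → X → ℝ} {μ : Measure X} {K₀ : ℝ} {L : ℝ≥0∞} {Ω : Set X} {ω : X → ℝ≥0∞}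
  {q t Λ : ℝ} {C D : ℝ≥0} {x₀ : X}

lemma ofReal_abs_rpow_le_setLAverage_add {ν : Measure X} {E : Set X} (hE : ν E ≠ 0)
    (hE' : ν E ≠ ∞) (hq : 0 ≤ q) {f : X → ℝ} (hf : Measurable f) (a : ℝ) :
    ENNReal.ofReal |a| ^ q ≤ 2 ^ q *
      (⨍⁻ y in E, ENNReal.ofReal |a - f y| ^ q ∂ν + ⨍⁻ y in E, ENNReal.ofReal |f y| ^ q ∂ν) := by
  have hdiff : Measurable fun y ↦ ENNReal.ofReal |a - f y| ^ q :=
    (hf.const_sub a).abs.ennreal_ofReal.pow_const q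
  calc ENNReal.ofReal |a| ^ q = ⨍⁻ _ in E, ENNReal.ofReal |a| ^ q ∂ν :=
        (setLAverage_const hE hE' _).symm
    _ ≤ ⨍⁻ y in E, 2 ^ q * (ENNReal.ofReal |a - f y| ^ q + ENNReal.ofReal |f y| ^ q) ∂ν :=
        lintegral_mono fun y ↦ by
          simpa only [sub_add_cancel] using ofReal_abs_add_rpow_le (a - f y) (f y) hq
    _ = _ := by
        simp only [setLAverage_eq']
        rw [lintegral_const_mul' _ _ (by finiteness), lintegral_add_left hdiff]

lemma exists_setLIntegral_le_energy (hX : IsQuasiMetricMeasure ρ μ K₀) (hL : IsDoubling ρ μ L) :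
    ∃ D : ℝ≥0, ∀ z r, 0 < r → ∀ E ⊆ ball ρ z r, MeasurableSet E → ∀ f : X → ℝ,
      ∀ x ∈ ball ρ z r, ∀ σ, 0 ≤ σ →
        ∫⁻ y in E, ENNReal.ofReal |f x - f y| ^ q ∂μ ≤
          D * μ (ball ρ z r) * ENNReal.ofReal (2 * K₀ * r) ^ σ * energy ρ μ E f q σ x := by
  have hK : 0 < K₀ := zero_lt_one.trans_le hX.one_le
  obtain ⟨D, hD⟩ := exists_U_le_mul_measure_ball hX hL
  refine ⟨D + 1, fun z r hr E hEB hE f x hx σ hσ ↦ ?_⟩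
  set c := ↑(D + 1) * μ (ball ρ z r) * ENNReal.ofReal (2 * K₀ * r) ^ σ
  have hc : c ≠ ∞ := ENNReal.mul_ne_top (ENNReal.mul_ne_top ENNReal.coe_ne_top
    (hL.measure_ball_ne_top z hr)) (ENNReal.rpow_ne_top_of_nonneg hσ ENNReal.ofReal_ne_top)
  have hc0 : c ≠ 0 := mul_ne_zero (mul_ne_zero (by simp) (hL.measure_ball_ne_zero z hr))
    (ENNReal.rpow_pos (ENNReal.ofReal_pos.2 (by positivity)) ENNReal.ofReal_ne_top).ne'
  rw [energy, ← lintegral_const_mul' _ _ hc]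
  refine setLIntegral_mono' hE fun y hy ↦ ?_
  obtain ⟨hρ, hU⟩ := hD z r hr x hx y (hEB hy)
  calc ENNReal.ofReal |f x - f y| ^ q = c * (ENNReal.ofReal |f x - f y| ^ q / c) :=
        (ENNReal.mul_div_cancel hc0 hc).symm
    _ ≤ _ := by
        gcongr _ * (_ / ?_)
        refine mul_le_mul' (hU.trans (mul_le_mul_left ?_ _))
          (ENNReal.rpow_le_rpow (ENNReal.ofReal_le_ofReal hρ) hσ)
        exact_mod_cast le_self_add

lemma exists_setLAverage_le_energy (hX : IsQuasiMetricMeasure ρ μ K₀) (hL : IsDoubling ρ μ L)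
    (D : ℝ≥0) :
    ∃ C : ℝ≥0, ∀ z r, 0 < r → ∀ E ⊆ ball ρ z r, MeasurableSet E →
      μ (ball ρ z r) ≤ D * μ E → ∀ f : X → ℝ, ∀ x ∈ ball ρ z r, ∀ σ, 0 ≤ σ →
        ⨍⁻ y in E, ENNReal.ofReal |f x - f y| ^ q ∂μ ≤
          C * ENNReal.ofReal (2 * K₀ * r) ^ σ * energy ρ μ E f q σ x := by
  obtain ⟨C, hC⟩ := exists_setLIntegral_le_energy hX hL
  refine ⟨D * C, fun z r hr E hEB hE hDE f x hx σ hσ ↦ ?_⟩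
  have hB0 := hL.measure_ball_ne_zero z hr
  set b := ENNReal.ofReal (2 * K₀ * r) ^ σ
  calc ⨍⁻ y in E, ENNReal.ofReal |f x - f y| ^ q ∂μ
      = (μ E)⁻¹ * ∫⁻ y in E, ENNReal.ofReal |f x - f y| ^ q ∂μ := by
        rw [setLAverage_eq, ENNReal.div_eq_inv_mul]
    _ ≤ D * (μ (ball ρ z r))⁻¹ * (C * μ (ball ρ z r) * b * energy ρ μ E f q σ x) :=
        mul_le_mul' (inv_le_mul_inv_of_le_mul hB0 hDE) (hC z r hr E hEB hE f x hx σ hσ)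
    _ = D * C * b * energy ρ μ E f q σ x * ((μ (ball ρ z r))⁻¹ * μ (ball ρ z r)) := by ring
    _ = _ := by
        rw [ENNReal.inv_mul_cancel hB0 (hL.measure_ball_ne_top z hr), mul_one, ENNReal.coe_mul]

lemma exists_sub_mul_rpow_le_energy (hX : IsQuasiMetricMeasure ρ μ K₀) (hL : IsDoubling ρ μ L)
    (hq : 0 < q) (D : ℝ≥0) :
    ∃ C : ℝ≥0, ∀ z r, 0 < r → ∀ E ⊆ ball ρ z r, MeasurableSet E →
      μ (ball ρ z r) ≤ D * μ E → ∀ f : X → ℝ, Measurable f → ∀ ε : ℝ≥0∞,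
      ⨍⁻ y in ball ρ z r, E.indicator (fun y ↦ ENNReal.ofReal |f y| ^ q) y ∂μ ≤ ε →
      ∀ x ∈ ball ρ z r, ∀ σ, 0 ≤ σ →
        (ENNReal.ofReal |f x| ^ q - C * ε) * ENNReal.ofReal (2 * K₀ * r) ^ (-σ) ≤
          C * energy ρ μ E f q σ x := by
  have hK : 0 < K₀ := zero_lt_one.trans_le hX.one_le
  obtain ⟨D', hD'⟩ := exists_setLAverage_le_energy hX hL D
  refine ⟨2 ^ q * (D' + D), fun z r hr E hEB hE hDE f hf ε hε x hx σ hσ ↦ ?_⟩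
  set g : X → ℝ≥0∞ := fun y ↦ ENNReal.ofReal |f y| ^ q
  set b := ENNReal.ofReal (2 * K₀ * r) ^ σ
  have hb : b ≠ ∞ := ENNReal.rpow_ne_top_of_nonneg hσ ENNReal.ofReal_ne_top
  have hb0 : b ≠ 0 :=
    (ENNReal.rpow_pos (ENNReal.ofReal_pos.2 (by positivity)) ENNReal.ofReal_ne_top).ne'
  have hB0 := hL.measure_ball_ne_zero z hr
  have hE0 : μ E ≠ 0 := fun h ↦ hB0 (by simpa [h] using hDE)
  have hE_top : μ E ≠ ∞ := measure_ne_top_of_subset hEB (hL.measure_ball_ne_top z hr)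
  have hmean : ⨍⁻ y in E, g y ∂μ ≤ D * ε :=
    calc ⨍⁻ y in E, g y ∂μ = ⨍⁻ y in E, E.indicator g y ∂μ := by
          rw [setLAverage_eq, setLAverage_eq, setLIntegral_congr_fun hE fun y hy ↦
            (indicator_of_mem hy g).symm]
      _ ≤ D * ⨍⁻ y in ball ρ z r, E.indicator g y ∂μ :=
          setLAverage_le_mul_setLAverage hEB hB0 hDE _
      _ ≤ D * ε := by gcongr
  rw [ENNReal.rpow_neg, ← div_eq_mul_inv, ENNReal.div_le_iff hb0 hb, tsub_le_iff_right]
  calc g x ≤ 2 ^ q * (D' * b * energy ρ μ E f q σ x + D * ε) :=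
        (ofReal_abs_rpow_le_setLAverage_add hE0 hE_top hq.le hf (f x)).trans
          (mul_le_mul_right (add_le_add (hD' z r hr E hEB hE hDE f x hx σ hσ) hmean) _)
    _ = 2 ^ q * D' * (energy ρ μ E f q σ x * b) + 2 ^ q * D * ε := by ring
    _ ≤ 2 ^ q * (D' + D) * (energy ρ μ E f q σ x * b) + 2 ^ q * (D' + D) * ε :=
        add_le_add (mul_le_mul_left (mul_le_mul_right le_self_add _) _)
          (mul_le_mul_left (mul_le_mul_right le_add_self _) _)
    _ = _ := by
        push_cast [ENNReal.coe_rpow_of_nonneg _ hq.le]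
        ring

lemma HasThickAnnuli.exists_sub_mul_tsum_le_energy (hthick : HasThickAnnuli ρ μ Ω x₀ Λ D)
    (hX : IsQuasiMetricMeasure ρ μ K₀) (hL : IsDoubling ρ μ L) (hΩ : MeasurableSet Ω)
    (hΛ : 1 < Λ) (hq : 0 < q) :
    ∃ C : ℝ≥0, ∀ f : X → ℝ, Measurable f → ∀ ε : ℝ≥0∞,
      (∀ᶠ r in atTop,
        ⨍⁻ y in ball ρ x₀ r, Ω.indicator (fun y ↦ ENNReal.ofReal |f y| ^ q) y ∂μ ≤ ε) →
      ∀ᶠ R in atTop, ∀ x ∈ ball ρ x₀ R, ∀ σ, 0 ≤ σ →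
        (ENNReal.ofReal |f x| ^ q - C * ε) * (ENNReal.ofReal (2 * K₀ * (Λ * R)) ^ (-σ) *
          ∑' n : ℕ, ENNReal.ofReal (Λ ^ n) ^ (-σ)) ≤ C * energy ρ μ Ω f q σ x := by
  have hK : 0 < K₀ := zero_lt_one.trans_le hX.one_le
  have : 0 < Λ := one_pos.trans hΛ
  obtain ⟨C, hC⟩ := exists_sub_mul_rpow_le_energy hX hL hq D
  refine ⟨C, fun f hf ε hε ↦ ?_⟩
  filter_upwards [hthick.eventually_exists_pairwise_disjoint hX hΩ hΛ,
    eventually_forall_ge_atTop.2 hε, eventually_gt_atTop 0]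
    with R ⟨E, hE_disj, hE⟩ hmean hR x hx σ hσ
  set g : X → ℝ≥0∞ := fun y ↦ ENNReal.ofReal |f y| ^ q
  have hscale : ∀ n, (g x - C * ε) *
      (ENNReal.ofReal (2 * K₀ * (Λ * R)) ^ (-σ) * ENNReal.ofReal (Λ ^ n) ^ (-σ)) ≤
        C * energy ρ μ (E n) f q σ x := by
    intro n
    obtain ⟨hEn, hEn_sub, hEn_thick⟩ := hE n
    have hRn : R ≤ Λ ^ (n + 1) * R := le_mul_of_one_le_left hR.le (one_le_pow₀ hΛ.le)
    have hmean_n : ⨍⁻ y in ball ρ x₀ (Λ ^ (n + 1) * R), (E n).indicator g y ∂μ ≤ ε :=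
      (lintegral_mono fun y ↦ indicator_le_indicator_of_subset
        (hEn_sub.trans inter_subset_left) (fun _ ↦ zero_le) y).trans (hmean _ hRn)
    have hpow : ENNReal.ofReal (2 * K₀ * (Λ * R)) ^ (-σ) * ENNReal.ofReal (Λ ^ n) ^ (-σ) =
        ENNReal.ofReal (2 * K₀ * (Λ ^ (n + 1) * R)) ^ (-σ) := by
      rw [← ENNReal.mul_rpow_of_ne_top ENNReal.ofReal_ne_top ENNReal.ofReal_ne_top,
        ← ENNReal.ofReal_mul (by positivity)]
      ring_nf
    rw [hpow]
    exact hC x₀ _ (hR.trans_le hRn) (E n) (hEn_sub.trans inter_subset_right) hEn hEn_thick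
      f hf ε hmean_n x (ball_subset_ball ρ x₀ hRn hx) σ hσ
  calc (g x - C * ε) * (ENNReal.ofReal (2 * K₀ * (Λ * R)) ^ (-σ) *
        ∑' n : ℕ, ENNReal.ofReal (Λ ^ n) ^ (-σ))
      = ∑' n : ℕ, (g x - C * ε) *
          (ENNReal.ofReal (2 * K₀ * (Λ * R)) ^ (-σ) * ENNReal.ofReal (Λ ^ n) ^ (-σ)) := by
        simp_rw [ENNReal.tsum_mul_left]
    _ ≤ ∑' n, C * energy ρ μ (E n) f q σ x := ENNReal.tsum_le_tsum hscale
    _ = C * energy ρ μ (⋃ n, E n) f q σ x := by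
        rw [ENNReal.tsum_mul_left, energy, lintegral_iUnion (fun n ↦ (hE n).1) hE_disj]
        rfl
    _ ≤ C * energy ρ μ Ω f q σ x := by
        gcongr
        exact lintegral_mono_set (iUnion_subset fun n ↦ (hE n).2.1.trans inter_subset_left)

lemma eventually_le_ofReal_mul_tsum_rpow_neg (hΛ : 1 < Λ) {b : ℝ} (hb : 0 < b) :
    ∀ᶠ σ in 𝓝[>] (0 : ℝ), ENNReal.ofReal (1 / Real.log Λ) / 2 ≤
      ENNReal.ofReal σ * (ENNReal.ofReal b ^ (-σ) * ∑' n : ℕ, ENNReal.ofReal (Λ ^ n) ^ (-σ)) := by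
  have hlim : Tendsto (fun σ : ℝ ↦ ENNReal.ofReal (b ^ (-σ))) (𝓝[>] 0) (𝓝 1) := by
    have hcont : Continuous fun σ : ℝ ↦ b ^ (-σ) :=
      Continuous.rpow continuous_const continuous_neg fun _ ↦ .inl hb.ne'
    simpa using (ENNReal.tendsto_ofReal (hcont.tendsto 0)).mono_left nhdsWithin_le_nhds
  filter_upwards [hlim.eventually_const_lt ENNReal.one_half_lt_one, self_mem_nhdsWithin]
    with σ hσb hσ
  calc ENNReal.ofReal (1 / Real.log Λ) / 2
      = 2⁻¹ * ENNReal.ofReal (1 / Real.log Λ) := ENNReal.div_eq_inv_mul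
    _ ≤ ENNReal.ofReal b ^ (-σ) *
          (ENNReal.ofReal σ * ∑' n : ℕ, ENNReal.ofReal (Λ ^ n) ^ (-σ)) := by
        rw [ENNReal.ofReal_rpow_of_pos hb]
        exact mul_le_mul' hσb.le (ofReal_le_ofReal_mul_tsum_rpow_neg hΛ hσ)
    _ = _ := mul_left_comm _ _ _

lemma HasThickAnnuli.exists_eventually_le_energy (hthick : HasThickAnnuli ρ μ Ω x₀ Λ D)
    (hX : IsQuasiMetricMeasure ρ μ K₀) (hL : IsDoubling ρ μ L) (hΩ : MeasurableSet Ω)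
    (hΛ : 1 < Λ) (hq : 0 < q) :
    ∃ C : ℝ≥0, ∀ f : X → ℝ, Measurable f →
      (∀ ε : ℝ≥0∞, ε ≠ 0 → ∀ᶠ r in atTop,
        ⨍⁻ y in ball ρ x₀ r, Ω.indicator (fun y ↦ ENNReal.ofReal |f y| ^ q) y ∂μ ≤ ε) →
      ∀ R, ∀ ε : ℝ≥0∞, ε ≠ 0 → ∀ᶠ σ in 𝓝[>] (0 : ℝ), ∀ x ∈ ball ρ x₀ R,
        ENNReal.ofReal |f x| ^ q ≤ C * (ENNReal.ofReal σ * energy ρ μ Ω f q σ x) + ε := by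
  have hK : 0 < K₀ := zero_lt_one.trans_le hX.one_le
  obtain ⟨C, hC⟩ := hthick.exists_sub_mul_tsum_le_energy hX hL hΩ hΛ hq
  have hlog : 0 < Real.log Λ := Real.log_pos hΛ
  set θ : ℝ≥0 := (1 / Real.log Λ).toNNReal / 2
  have hθ : θ ≠ 0 := by simpa [θ] using hlog
  refine ⟨θ⁻¹ * C, fun f hf hmean R ε hε ↦ ?_⟩
  have hε' : ε / C ≠ 0 := ENNReal.div_ne_zero.2 ⟨hε, ENNReal.coe_ne_top⟩
  obtain ⟨R', hR', hRR', hR'0⟩ := ((hC f hf _ (hmean _ hε')).and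
    ((eventually_ge_atTop R).and (eventually_gt_atTop 0))).exists
  filter_upwards [eventually_le_ofReal_mul_tsum_rpow_neg hΛ
    (by positivity : 0 < 2 * K₀ * (Λ * R')), self_mem_nhdsWithin] with σ hσ hσ0 x hx
  set H := ENNReal.ofReal |f x| ^ q - C * (ε / C)
  set S := ENNReal.ofReal (2 * K₀ * (Λ * R')) ^ (-σ) * ∑' n : ℕ, ENNReal.ofReal (Λ ^ n) ^ (-σ)
  have hH : θ * H ≤ C * (ENNReal.ofReal σ * energy ρ μ Ω f q σ x) :=
    calc θ * H ≤ ENNReal.ofReal σ * S * H := by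
          gcongr
          simpa [θ, ENNReal.ofReal] using hσ
      _ = ENNReal.ofReal σ * (H * S) := by ring
      _ ≤ ENNReal.ofReal σ * (C * energy ρ μ Ω f q σ x) :=
          mul_le_mul_right (hR' x (ball_subset_ball ρ x₀ hRR' hx) σ (le_of_lt hσ0)) _
      _ = _ := mul_left_comm _ _ _
  calc ENNReal.ofReal |f x| ^ q ≤ H + C * (ε / C) := le_tsub_add
    _ ≤ (θ : ℝ≥0∞)⁻¹ * (C * (ENNReal.ofReal σ * energy ρ μ Ω f q σ x)) + ε :=
        add_le_add ((ENNReal.mul_le_iff_le_inv (by simpa using hθ) ENNReal.coe_ne_top).1 hH)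
          ENNReal.mul_div_le
    _ = _ := by rw [ENNReal.coe_mul, ENNReal.coe_inv hθ, mul_assoc]

lemma MuckenhouptBound.exists_le_liminf_energy (hω : MuckenhouptBound ρ μ ω t C)
    (hX : IsQuasiMetricMeasure ρ μ K₀) (hL : IsDoubling ρ μ L) (hωm : Measurable ω)
    (hΩ : MeasurableSet Ω) (hWRD : WRD ρ μ) (hWMD : WMD ρ μ Ω) (hq : 0 < q) (ht : 0 < t) :
    ∃ C' : ℝ≥0, ∀ f : X → ℝ, Measurable f →
      ∫⁻ x in Ω, (ENNReal.ofReal |f x| ^ q) ^ t * ω x ∂μ ≠ ∞ →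
      ∫⁻ x in Ω, (ENNReal.ofReal |f x| ^ q) ^ t * ω x ∂μ ≤ C' * liminf (fun σ ↦
        ENNReal.ofReal σ ^ t * ∫⁻ x in Ω, energy ρ μ Ω f q σ x ^ t * ω x ∂μ) (𝓝[>] 0) := by
  obtain ⟨x₀, Λ, D, hΛ, hthick⟩ := exists_hasThickAnnuli hX hL hWRD hWMD
  rcases hω.lintegral_eq_zero_or_top hX hL ht hΩ hΛ hthick with hω_zero | hω_top
  · have hzero : ∀ g : X → ℝ≥0∞, ∫⁻ x in Ω, g x * ω x ∂μ = 0 := fun g ↦ by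
      rw [lintegral_eq_zero_iff hωm] at hω_zero
      refine lintegral_eq_zero_of_ae_eq_zero ?_
      filter_upwards [ae_restrict_of_ae hω_zero] with x hx
      simp [hx]
    exact ⟨0, fun f _ _ ↦ (hzero _).trans_le zero_le⟩
  obtain ⟨C₁, hC₁⟩ := hthick.exists_eventually_le_energy hX hL hΩ hΛ hq
  refine ⟨C₁ ^ t, fun f hf hfin ↦ ?_⟩
  have hg : Measurable fun x ↦ ENNReal.ofReal |f x| ^ q := hf.abs.ennreal_ofReal.pow_const q
  have hmean := fun (ε : ℝ≥0∞) (hε : ε ≠ 0) ↦ hω.eventually_setLAverage_le hX hL ht hω_top x₀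
    (hg.indicator hΩ) (by rwa [lintegral_indicator_rpow_mul hΩ _ ω ht]) hε
  have hC₁t : (C₁ : ℝ≥0∞) ^ t ≠ ∞ := ENNReal.rpow_ne_top_of_nonneg ht.le ENNReal.coe_ne_top
  have hσt : ∀ σ, ENNReal.ofReal σ ^ t ≠ ∞ := fun σ ↦
    ENNReal.rpow_ne_top_of_nonneg ht.le ENNReal.ofReal_ne_top
  calc ∫⁻ x in Ω, (ENNReal.ofReal |f x| ^ q) ^ t * ω x ∂μ
      ≤ liminf (fun σ ↦ ∫⁻ x in Ω,
          (C₁ * (ENNReal.ofReal σ * energy ρ μ Ω f q σ x)) ^ t * ω x ∂μ) (𝓝[>] 0) :=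
        lintegral_rpow_mul_le_liminf (fun k : ℕ ↦ hX.measurableSet_ball x₀ k)
          (eventually_mem_ball_natCast ρ x₀) hg hωm ht fun k ε hε ↦
            (hC₁ f hf hmean k ε hε).mono fun σ hσ ↦ .of_forall hσ
    _ = liminf (fun σ ↦ (C₁ : ℝ≥0∞) ^ t *
          (ENNReal.ofReal σ ^ t * ∫⁻ x in Ω, energy ρ μ Ω f q σ x ^ t * ω x ∂μ)) (𝓝[>] 0) := by
        simp_rw [ENNReal.mul_rpow_of_nonneg _ _ ht.le, mul_assoc,
          lintegral_const_mul' _ _ hC₁t, lintegral_const_mul' _ _ (hσt _)]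
    _ = _ := by
        rw [ENNReal.liminf_const_mul_of_ne_top hC₁t, ENNReal.coe_rpow_of_nonneg _ ht.le]

end LowerBound

/-! ### From energies to norms -/

section Norms

variable {ρ : X → X → ℝ} {μ : Measure X} {K₀ : ℝ} {L : ℝ≥0∞} {Ω : Set X} {ω : X → ℝ≥0∞}
  {q r : ℝ} {A : ℝ≥0}

lemma energy_add_const (ρ : X → X → ℝ) (μ : Measure X) (E : Set X) (f : X → ℝ) (q σ a : ℝ) :
    energy ρ μ E (fun x ↦ f x + a) q σ = energy ρ μ E f q σ := by
  ext x
  simp only [energy, add_sub_add_right_eq_sub]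

lemma wnorm_rpow (μ : Measure X) (ω : X → ℝ≥0∞) (E : Set X) (g : X → ℝ≥0∞) (a r : ℝ) :
    wnorm μ ω r E (fun x ↦ g x ^ a) = (∫⁻ x in E, g x ^ (a * r) * ω x ∂μ) ^ (1 / r) := by
  simp only [wnorm, ENNReal.rpow_mul]

lemma wnorm_eq_lintegral_rpow_rpow (μ : Measure X) (ω : X → ℝ≥0∞) (E : Set X) (g : X → ℝ≥0∞)
    (hq : q ≠ 0) (r : ℝ) :
    wnorm μ ω r E g = (∫⁻ x in E, (g x ^ q) ^ (r / q) * ω x ∂μ) ^ (1 / r) := by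
  simp only [wnorm, ← ENNReal.rpow_mul, mul_div_cancel₀ r hq]

lemma wnorm_sob (ρ : X → X → ℝ) (μ : Measure X) (ω : X → ℝ≥0∞) (E : Set X) (f : X → ℝ)
    (q r s : ℝ) :
    wnorm μ ω r E (sob ρ μ E f q s) =
      (∫⁻ x in E, energy ρ μ E f q (s * q) x ^ (r / q) * ω x ∂μ) ^ (1 / r) := by
  rw [← one_div_mul_eq_div q r, ← wnorm_rpow]
  rfl

lemma ofReal_rpow_mul_wnorm_sob (ρ : X → X → ℝ) (μ : Measure X) (ω : X → ℝ≥0∞) (E : Set X)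
    (f : X → ℝ) (hq : 0 < q) (hr : 0 < r) (s : ℝ) :
    ENNReal.ofReal s ^ (1 / q) * wnorm μ ω r E (sob ρ μ E f q s) =
      ENNReal.ofReal q⁻¹ ^ (1 / q) * (ENNReal.ofReal (s * q) ^ (r / q) *
        ∫⁻ x in E, energy ρ μ E f q (s * q) x ^ (r / q) * ω x ∂μ) ^ (1 / r) := by
  have hs : ENNReal.ofReal s = ENNReal.ofReal q⁻¹ * ENNReal.ofReal (s * q) := by
    rw [← ENNReal.ofReal_mul (by positivity), mul_comm s, inv_mul_cancel_left₀ hq.ne']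
  have hexp : r / q * (1 / r) = 1 / q := by field_simp
  rw [wnorm_sob, hs, ENNReal.mul_rpow_of_nonneg _ _ (by positivity),
    ENNReal.mul_rpow_of_nonneg _ _ (by positivity), ← ENNReal.rpow_mul, hexp, mul_assoc]

lemma map_mul_right_nhdsGT_zero (hq : 0 < q) : map (· * q) (𝓝[>] 0) = 𝓝[>] (0 : ℝ) := by
  simp_rw [mul_comm _ q]
  nth_rw 1 [← comap_mulLeft_nhdsGT_zero hq]
  exact map_comap_of_surjective (mul_left_surjective₀ hq.ne') _

lemma liminf_ofReal_rpow_mul_wnorm_sob (ρ : X → X → ℝ) (μ : Measure X) (ω : X → ℝ≥0∞)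
    (E : Set X) (f : X → ℝ) (hq : 0 < q) (hr : 0 < r) :
    liminf (fun s ↦ ENNReal.ofReal s ^ (1 / q) * wnorm μ ω r E (sob ρ μ E f q s)) (𝓝[>] 0) =
      ENNReal.ofReal q⁻¹ ^ (1 / q) * liminf (fun σ ↦ ENNReal.ofReal σ ^ (r / q) *
        ∫⁻ x in E, energy ρ μ E f q σ x ^ (r / q) * ω x ∂μ) (𝓝[>] 0) ^ (1 / r) := by
  simp_rw [ofReal_rpow_mul_wnorm_sob ρ μ ω E f hq hr]
  rw [ENNReal.liminf_const_mul_of_ne_top (by finiteness)]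
  nth_rw 2 [← map_mul_right_nhdsGT_zero hq]
  exact congrArg _ ((ENNReal.monotone_rpow_of_nonneg (by positivity)).map_liminf_of_continuousAt _
    ENNReal.continuous_rpow_const.continuousAt).symm

lemma limsup_ofReal_rpow_mul_wnorm_sob (ρ : X → X → ℝ) (μ : Measure X) (ω : X → ℝ≥0∞)
    (E : Set X) (f : X → ℝ) (hq : 0 < q) (hr : 0 < r) :
    limsup (fun s ↦ ENNReal.ofReal s ^ (1 / q) * wnorm μ ω r E (sob ρ μ E f q s)) (𝓝[>] 0) =
      ENNReal.ofReal q⁻¹ ^ (1 / q) * limsup (fun σ ↦ ENNReal.ofReal σ ^ (r / q) *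
        ∫⁻ x in E, energy ρ μ E f q σ x ^ (r / q) * ω x ∂μ) (𝓝[>] 0) ^ (1 / r) := by
  simp_rw [ofReal_rpow_mul_wnorm_sob ρ μ ω E f hq hr]
  rw [ENNReal.limsup_const_mul_of_ne_top (by finiteness)]
  nth_rw 2 [← map_mul_right_nhdsGT_zero hq]
  exact congrArg _ ((ENNReal.monotone_rpow_of_nonneg (by positivity)).map_limsup_of_continuousAt _
    ENNReal.continuous_rpow_const.continuousAt).symm

lemma MuckenhouptBound.exists_mul_iInf_wnorm_le_liminf (hω : MuckenhouptBound ρ μ ω (r / q) A)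
    (hX : IsQuasiMetricMeasure ρ μ K₀) (hL : IsDoubling ρ μ L) (hωm : Measurable ω)
    (hΩ : MeasurableSet Ω) (hWRD : WRD ρ μ) (hWMD : WMD ρ μ Ω) (hq : 0 < q) (hr : 0 < r) :
    ∃ C : ℝ≥0, 0 < C ∧ ∀ f : X → ℝ, Measurable f →
      ⨅ a : ℝ, wnorm μ ω r Ω (fun x ↦ ENNReal.ofReal |f x + a|) < ∞ →
      C * ⨅ a : ℝ, wnorm μ ω r Ω (fun x ↦ ENNReal.ofReal |f x + a|) ≤
        liminf (fun s ↦ ENNReal.ofReal s ^ (1 / q) * wnorm μ ω r Ω (sob ρ μ Ω f q s))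
          (𝓝[>] 0) := by
  obtain ⟨D, hD⟩ := hω.exists_le_liminf_energy hX hL hωm hΩ hWRD hWMD hq (by positivity)
  set κ : ℝ≥0 := q⁻¹.toNNReal ^ (1 / q)
  set M : ℝ≥0 := (D + 1) ^ (1 / r)
  have hr' : 0 < 1 / r := by positivity
  have hM : M ≠ 0 := (by positivity : 0 < M).ne'
  have hκ : ENNReal.ofReal q⁻¹ ^ (1 / q) = κ := (ENNReal.coe_rpow_of_nonneg _ (by positivity)).symm
  refine ⟨κ / M, div_pos (NNReal.rpow_pos (by simpa using hq)) hM.bot_lt, fun f hf hfin ↦ ?_⟩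
  obtain ⟨a, ha⟩ := iInf_lt_iff.1 hfin
  have hfa := wnorm_eq_lintegral_rpow_rpow μ ω Ω (fun x ↦ ENNReal.ofReal |f x + a|) hq.ne' r
  rw [hfa, ENNReal.rpow_lt_top_iff_of_pos hr'] at ha
  have hlow := hD (fun x ↦ f x + a) (hf.add_const a) ha.ne
  simp only [energy_add_const] at hlow
  rw [liminf_ofReal_rpow_mul_wnorm_sob ρ μ ω Ω f hq hr, hκ]
  set ℓ := liminf (fun σ ↦ ENNReal.ofReal σ ^ (r / q) *
    ∫⁻ x in Ω, energy ρ μ Ω f q σ x ^ (r / q) * ω x ∂μ) (𝓝[>] 0)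
  calc (κ / M : ℝ≥0) * ⨅ a : ℝ, wnorm μ ω r Ω (fun x ↦ ENNReal.ofReal |f x + a|)
      ≤ (κ / M : ℝ≥0) * ((D + 1 : ℝ≥0) * ℓ) ^ (1 / r) := by
        refine mul_le_mul_right ((iInf_le _ a).trans (hfa.trans_le ?_)) _
        exact ENNReal.rpow_le_rpow (hlow.trans (mul_le_mul_left (by simp) _)) hr'.le
    _ = (κ / M * M : ℝ≥0) * ℓ ^ (1 / r) := by
        rw [ENNReal.mul_rpow_of_nonneg _ _ hr'.le, ← ENNReal.coe_rpow_of_nonneg _ hr'.le,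
          ← mul_assoc, ENNReal.coe_mul]
    _ = κ * ℓ ^ (1 / r) := by rw [div_mul_cancel₀ κ hM]

lemma MuckenhouptBound.exists_limsup_le_mul_iInf_wnorm (hω : MuckenhouptBound ρ μ ω (r / q) A)
    (hX : IsQuasiMetricMeasure ρ μ K₀) (hL : IsDoubling ρ μ L) (hωm : Measurable ω)
    (hq : 0 < q) (hqr : q ≤ r) :
    ∃ C : ℝ≥0, 0 < C ∧ ∀ E, MeasurableSet E → ∀ f : X → ℝ, Measurable f → ∀ s₀, 0 < s₀ →
      wnorm μ ω r E (sob ρ μ E f q s₀) < ∞ →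
      limsup (fun s ↦ ENNReal.ofReal s ^ (1 / q) * wnorm μ ω r E (sob ρ μ E f q s))
          (𝓝[>] 0) ≤
        C * ⨅ a : ℝ, wnorm μ ω r E (fun x ↦ ENNReal.ofReal |f x + a|) := by
  obtain ⟨D, hD⟩ := hω.exists_limsup_energy_le hX hL hωm hq.le ((one_le_div hq).2 hqr)
  have hr : 0 < r := hq.trans_le hqr
  have hr' : 0 < 1 / r := by positivity
  set κ : ℝ≥0 := q⁻¹.toNNReal ^ (1 / q)
  set M : ℝ≥0 := (D + 1) ^ (1 / r)
  have hκ : ENNReal.ofReal q⁻¹ ^ (1 / q) = κ := (ENNReal.coe_rpow_of_nonneg _ (by positivity)).symm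
  have hκM : 0 < κ * M := mul_pos (NNReal.rpow_pos (by simpa using hq)) (by positivity)
  refine ⟨κ * M, hκM, fun E hE f hf s₀ hs₀ hfin ↦ ?_⟩
  rw [wnorm_sob, ENNReal.rpow_lt_top_iff_of_pos hr'] at hfin
  rw [limsup_ofReal_rpow_mul_wnorm_sob ρ μ ω E f hq hr, hκ,
    ENNReal.mul_iInf_of_ne (ENNReal.coe_ne_zero.2 hκM.ne') ENNReal.coe_ne_top]
  refine le_iInf fun a ↦ ?_
  have hup := hD E hE (fun x ↦ f x + a) (hf.add_const a) (s₀ * q) (by positivity)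
    (by simpa only [energy_add_const] using hfin.ne)
  simp only [energy_add_const] at hup
  rw [wnorm_eq_lintegral_rpow_rpow μ ω E _ hq.ne', ENNReal.coe_mul, mul_assoc,
    ENNReal.coe_rpow_of_nonneg _ hr'.le, ← ENNReal.mul_rpow_of_nonneg _ _ hr'.le]
  exact mul_le_mul_right (ENNReal.rpow_le_rpow (hup.trans (mul_le_mul_left (by simp) _)) hr'.le) _

lemma exists_muckenhouptBound_of_A1Const_or_ApConst {p : ℝ} (hq : 0 < q)
    (hqp : q ≤ p) (hpr : p ≤ r) (hωm : Measurable ω)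
    (hA : (r = p ∧ A1Const ρ μ ω < ∞) ∨ (p < r ∧ ApConst ρ μ ω (r / p) < ∞)) :
    ∃ C, MuckenhouptBound ρ μ ω (r / q) C := by
  have hp : 0 < p := hq.trans_le hqp
  have hexp : r / p ≤ r / q := div_le_div_of_nonneg_left (hp.le.trans hpr) hq hqp
  obtain ⟨C, hC⟩ : ∃ C, MuckenhouptBound ρ μ ω (r / p) C := by
    rcases hA with ⟨rfl, hA⟩ | ⟨hlt, hA⟩
    · rw [div_self hp.ne']
      exact MuckenhouptBound.of_A1Const hA
    · exact MuckenhouptBound.of_ApConst hωm ((one_lt_div hp).2 hlt) hA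
  exact ⟨C, hC.mono_exponent (div_pos (hp.trans_le hpr) hp) hexp⟩

end Norms

theorem statement12_general {ρ : X → X → ℝ} {μ : Measure X} {K₀ : ℝ} {L : ℝ≥0∞}
    (hX : IsQuasiMetricMeasure ρ μ K₀) (hL : IsDoubling ρ μ L) (hWRD : WRD ρ μ)
    {Ω : Set X} (hΩ : MeasurableSet Ω) (hWMD : WMD ρ μ Ω)
    {q r : ℝ} (hq : 0 < q) (hqr : q ≤ r) {ω : X → ℝ≥0∞} (hωm : Measurable ω)
    {A : ℝ≥0} (hω : MuckenhouptBound ρ μ ω (r / q) A) :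
    ∃ C C' : ℝ≥0, 0 < C ∧ 0 < C' ∧ ∀ f : X → ℝ, Measurable f →
      (⨅ a : ℝ, wnorm μ ω r Ω (fun x ↦ ENNReal.ofReal |f x + a|) < ∞ →
        C * ⨅ a : ℝ, wnorm μ ω r Ω (fun x ↦ ENNReal.ofReal |f x + a|) ≤
          liminf (fun s ↦ ENNReal.ofReal s ^ (1 / q) * wnorm μ ω r Ω (sob ρ μ Ω f q s))
            (𝓝[>] 0)) ∧
      ∀ s₀, 0 < s₀ → wnorm μ ω r Ω (sob ρ μ Ω f q s₀) < ∞ →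
        limsup (fun s ↦ ENNReal.ofReal s ^ (1 / q) * wnorm μ ω r Ω (sob ρ μ Ω f q s))
            (𝓝[>] 0) ≤
          C' * ⨅ a : ℝ, wnorm μ ω r Ω (fun x ↦ ENNReal.ofReal |f x + a|) := by
  obtain ⟨C, hC, hlow⟩ := hω.exists_mul_iInf_wnorm_le_liminf hX hL hωm hΩ hWRD hWMD hq
    (hq.trans_le hqr)
  obtain ⟨C', hC', hup⟩ := hω.exists_limsup_le_mul_iInf_wnorm hX hL hωm hq hqr
  exact ⟨C, C', hC, hC', fun f hf ↦ ⟨hlow f hf, hup Ω hΩ f hf⟩⟩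

theorem statement12 [Nonempty X] (ρ : X → X → ℝ) (μ : Measure X) (K₀ : ℝ) (L : ℝ≥0∞)
    (hX : IsQuasiMetricMeasure ρ μ K₀) (hL : IsDoubling ρ μ L) (hWRD : WRD ρ μ)
    (Ω : Set X) (hΩm : MeasurableSet Ω) (hΩo : IsRhoOpen ρ Ω) (hWMD : WMD ρ μ Ω)
    (p q r : ℝ) (hq : 0 < q) (hqp : q ≤ p) (hpr : p ≤ r)
    (ω : X → ℝ≥0∞) (hω : Measurable ω)
    (hA : (r = p ∧ A1Const ρ μ ω < ∞) ∨ (p < r ∧ ApConst ρ μ ω (r / p) < ∞)) :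
    ∃ C C' : ℝ≥0, 0 < C ∧ 0 < C' ∧
      ∀ f : X → ℝ, Measurable f →
        (⨅ a : ℝ, wnorm μ ω r Ω fun x => ENNReal.ofReal |f x + a|) < ∞ →
        (∃ s₀ ∈ Set.Ioo (0:ℝ) 1, wnorm μ ω r Ω (sob ρ μ Ω f q s₀) < ∞) →
        (C : ℝ≥0∞) * (⨅ a : ℝ, wnorm μ ω r Ω fun x => ENNReal.ofReal |f x + a|) ≤
            liminf (fun s : ℝ => ENNReal.ofReal s ^ (1 / q) * wnorm μ ω r Ω (sob ρ μ Ω f q s))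
              (𝓝[>] (0:ℝ)) ∧
          limsup (fun s : ℝ => ENNReal.ofReal s ^ (1 / q) * wnorm μ ω r Ω (sob ρ μ Ω f q s))
              (𝓝[>] (0:ℝ)) ≤
            (C' : ℝ≥0∞) * (⨅ a : ℝ, wnorm μ ω r Ω fun x => ENNReal.ofReal |f x + a|) := by
  obtain ⟨A, hA⟩ := exists_muckenhouptBound_of_A1Const_or_ApConst hq hqp hpr hω hA
  obtain ⟨C, C', hC, hC', h⟩ := statement12_general hX hL hWRD hΩm hWMD hq (hqp.trans hpr) hω hA
  exact ⟨C, C', hC, hC', fun f hf hfin ⟨s₀, hs₀, hs₀_fin⟩ ↦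
    ⟨(h f hf).1 hfin, (h f hf).2 s₀ hs₀.1 hs₀_fin⟩⟩

end Paper
end
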